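/- arXiv:1405.2411 — 2 statements merged into one kernel-verified Lean document; each statement's English description precedes it below -/
import Mathlib

section
/- Assume ν({−1}) = ν({1}) = 0. Define f(t) := (1/(2π)) ∫_{[−1,1]} (1−λ²)/(1+λ²−2λ·cos t) ν(dλ) for t ∈ [0,2π]. Then f is nonnegative with ∫₀^{2π} f(t) dt < ∞, and for every integer n ≥ 0 one has ∫_{[−1,1]} λ^n ν(dλ) = ∫₀^{2π} e^{int} f(t) dt; that is, the spectral distribution function of the stationary sequence is absolutely continuous with spectral density f. -/
open MeasureTheory Filter Topology Set

/-!
For `|λ| < 1` the integrand `(1 - λ²) / (1 + λ² - 2λ cos t)` is the Poisson kernel of the unit disc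
with pole `λ`, evaluated at `e^{it}`. Hence `2πf` is the density of the balayage of `ν` onto the
unit circle: by Fubini, integrating a function holomorphic in the disc against it averages the
Poisson formula over `ν`, which returns the `ν`-integral of that function. The theorem is the case
of the monomials. Fubini applies although the kernel is unbounded near `λ = ±1`, because it is
nonnegative and its circle average is `1` for every pole.
-/

section PoissonKernel

variable {c w z : ℂ} {R : ℝ}

lemma poissonKernel_nonneg (h : dist w c ≤ dist z c) : 0 ≤ poissonKernel c w z := by
  rw [dist_eq_norm, dist_eq_norm] at h
  rw [poissonKernel_def]
  have hsq : ‖w - c‖ ^ 2 ≤ ‖z - c‖ ^ 2 := by gcongr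
  exact div_nonneg (sub_nonneg.2 hsq) (sq_nonneg _)

lemma poissonKernel_circleMap_nonneg (hw : w ∈ Metric.ball c R) (t : ℝ) :
    0 ≤ poissonKernel c w (circleMap c R t) := by
  refine poissonKernel_nonneg ((Metric.mem_ball.1 hw).le.trans ?_)
  simpa [dist_eq_norm] using le_abs_self R

lemma measurable_uncurry_poissonKernel (c : ℂ) :
    Measurable (Function.uncurry (poissonKernel c)) := by
  simp only [Function.uncurry_def, poissonKernel_def]
  fun_prop

lemma circleIntegrable_poissonKernel (hw : w ∈ Metric.ball c R) :
    CircleIntegrable (poissonKernel c w) c R := by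
  rw [poissonKernel_eq_re_herglotzRieszKernel]
  exact (Complex.continuous_re.comp_continuousOn
    (continuousOn_herglotzRieszKernel_sphere hw)).circleIntegrable'

lemma circleAverage_poissonKernel (hw : w ∈ Metric.ball c R) :
    Real.circleAverage (poissonKernel c w) c R = 1 := by
  simpa [Pi.mul_def] using
    (InnerProductSpace.harmonicContOnCl_const (c := (1 : ℝ))).circleAverage_poissonKernel_smul hw

lemma poissonKernel_ofReal_circleMap (l t : ℝ) :
    poissonKernel 0 (l : ℂ) (circleMap 0 1 t) =
      (1 - l ^ 2) / (1 + l ^ 2 - 2 * l * Real.cos t) := by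
  have hdist : ‖circleMap 0 1 t - (l : ℂ)‖ ^ 2 = 1 + l ^ 2 - 2 * l * Real.cos t := by
    rw [circleMap_zero, Complex.ofReal_one, one_mul, ← Complex.normSq_eq_norm_sq,
      Complex.normSq_apply, Complex.sub_re, Complex.sub_im, Complex.exp_ofReal_mul_I_re,
      Complex.exp_ofReal_mul_I_im, Complex.ofReal_re, Complex.ofReal_im]
    linear_combination Real.sin_sq_add_cos_sq t
  simp [poissonKernel_def, hdist]

end PoissonKernel

/-- The density, with respect to the normalized arc length `dt / 2π` of a circle centred at `c`, of
the balayage (sweeping) onto that circle of a measure `μ` carried by the disc it bounds. -/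
noncomputable def poissonBalayage (c : ℂ) (μ : Measure ℂ) (z : ℂ) : ℝ :=
  ∫ w, poissonKernel c w z ∂μ

section Balayage

variable {c : ℂ} {R : ℝ} {μ : Measure ℂ}
  {E : Type*} [NormedAddCommGroup E] [NormedSpace ℝ E] {g : ℂ → E}

lemma poissonBalayage_circleMap_nonneg (hμ : ∀ᵐ w ∂μ, w ∈ Metric.ball c R) (t : ℝ) :
    0 ≤ poissonBalayage c μ (circleMap c R t) :=
  integral_nonneg_of_ae (hμ.mono fun _ hw ↦ poissonKernel_circleMap_nonneg hw t)

variable [IsFiniteMeasure μ]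

lemma integrable_prod_poissonKernel_circleMap (hμ : ∀ᵐ w ∂μ, w ∈ Metric.ball c R) :
    Integrable (fun p : ℂ × ℝ ↦ poissonKernel c p.1 (circleMap c R p.2))
      (μ.prod (volume.restrict (Ioc 0 (2 * Real.pi)))) := by
  have hmeas : Measurable fun p : ℂ × ℝ ↦ poissonKernel c p.1 (circleMap c R p.2) :=
    (measurable_uncurry_poissonKernel c).comp (f := fun p : ℂ × ℝ ↦ (p.1, circleMap c R p.2))
      (by fun_prop)
  have hnorm {w : ℂ} (hw : w ∈ Metric.ball c R) :
      ∫ t in Ioc 0 (2 * Real.pi), ‖poissonKernel c w (circleMap c R t)‖ = 2 * Real.pi := by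
    simp_rw [Real.norm_of_nonneg (poissonKernel_circleMap_nonneg hw _)]
    rw [← intervalIntegral.integral_of_le Real.two_pi_pos.le]
    have havg := circleAverage_poissonKernel hw
    rw [Real.circleAverage_def, smul_eq_mul, inv_mul_eq_one₀ Real.two_pi_pos.ne'] at havg
    exact havg.symm
  rw [integrable_prod_iff hmeas.aestronglyMeasurable]
  constructor
  · filter_upwards [hμ] with w hw using (circleIntegrable_poissonKernel hw).1
  · refine (integrable_const (2 * Real.pi)).congr ?_
    filter_upwards [hμ] with w hw using (hnorm hw).symm

lemma circleIntegrable_poissonBalayage (hμ : ∀ᵐ w ∂μ, w ∈ Metric.ball c R) :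
    CircleIntegrable (poissonBalayage c μ) c R := by
  rw [circleIntegrable_def, intervalIntegrable_iff_integrableOn_Ioc_of_le Real.two_pi_pos.le]
  exact (integrable_prod_poissonKernel_circleMap hμ).integral_prod_right

lemma integrable_prod_poissonKernel_smul_circleMap (hμ : ∀ᵐ w ∂μ, w ∈ Metric.ball c R)
    (hg : ContinuousOn g (Metric.sphere c |R|)) :
    Integrable (fun p : ℂ × ℝ ↦ poissonKernel c p.1 (circleMap c R p.2) • g (circleMap c R p.2))
      (μ.prod (volume.restrict (Ioc 0 (2 * Real.pi)))) := by
  obtain ⟨C, hC⟩ := (isCompact_sphere c |R|).exists_bound_of_continuousOn hg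
  have hcont : Continuous fun t ↦ g (circleMap c R t) :=
    hg.comp_continuous (continuous_circleMap c R) (circleMap_mem_sphere' c R)
  exact (integrable_prod_poissonKernel_circleMap hμ).smul_bdd C
    (hcont.comp continuous_snd).aestronglyMeasurable
    (.of_forall fun p ↦ hC _ (circleMap_mem_sphere' c R p.2))

lemma circleAverage_poissonBalayage_smul [CompleteSpace E]
    (hμ : ∀ᵐ w ∂μ, w ∈ Metric.ball c R) (hg : ContinuousOn g (Metric.sphere c |R|)) :
    Real.circleAverage (poissonBalayage c μ • g) c R =
      ∫ w, Real.circleAverage (poissonKernel c w • g) c R ∂μ := by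
  have hswap := integral_integral_swap
    (f := fun w t ↦ poissonKernel c w (circleMap c R t) • g (circleMap c R t))
    (integrable_prod_poissonKernel_smul_circleMap hμ hg)
  simp_rw [integral_smul_const] at hswap
  simp_rw [Real.circleAverage_def, intervalIntegral.integral_of_le Real.two_pi_pos.le,
    integral_smul, Pi.smul_apply']
  exact congrArg _ hswap.symm

lemma circleAverage_poissonBalayage_smul_of_diffContOnCl
    {F : Type*} [NormedAddCommGroup F] [NormedSpace ℂ F] [CompleteSpace F] {g : ℂ → F}
    (hμ : ∀ᵐ w ∂μ, w ∈ Metric.ball c R) (hg : DiffContOnCl ℂ g (Metric.ball c R)) :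
    Real.circleAverage (poissonBalayage c μ • g) c R = ∫ w, g w ∂μ := by
  obtain rfl | hμ_ne := eq_zero_or_neZero μ
  · simp [poissonBalayage, Real.circleAverage_def]
  obtain ⟨w, hw⟩ := hμ.exists
  have hR : |R| = R := abs_of_pos (Metric.pos_of_mem_ball hw)
  have hcont : ContinuousOn g (Metric.sphere c |R|) := by
    rw [hR]
    exact hg.continuousOn_ball.mono Metric.sphere_subset_closedBall
  rw [circleAverage_poissonBalayage_smul hμ hcont]
  exact integral_congr_ae (hμ.mono fun w hw ↦ hg.circleAverage_poissonKernel_smul hw)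

end Balayage

theorem reversible_spectral_density_general
    (ν : Measure ℂ) [IsFiniteMeasure ν] (hν : ∀ᵐ w ∂ν, w ∈ Metric.ball (0 : ℂ) 1)
    (f : ℝ → ℝ) (hf : ∀ t, f t = 1 / (2 * Real.pi) * ∫ w, poissonKernel 0 w (circleMap 0 1 t) ∂ν) :
    (∀ t, 0 ≤ f t) ∧ IntegrableOn f (Ioc 0 (2 * Real.pi)) ∧
    ∀ n : ℕ, ∫ w, w ^ n ∂ν =
      ∫ t in (0 : ℝ)..(2 * Real.pi), Complex.exp (Complex.I * n * t) * (f t : ℂ) := by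
  obtain rfl : f = fun t ↦ 1 / (2 * Real.pi) * poissonBalayage 0 ν (circleMap 0 1 t) := funext hf
  refine ⟨fun t ↦ mul_nonneg (by positivity) (poissonBalayage_circleMap_nonneg hν t),
    (circleIntegrable_poissonBalayage hν).1.const_mul _, fun n ↦ ?_⟩
  have hpow : DiffContOnCl ℂ (fun z : ℂ ↦ z ^ n) (Metric.ball 0 1) :=
    (differentiable_pow n).diffContOnCl
  rw [← circleAverage_poissonBalayage_smul_of_diffContOnCl hν hpow, Real.circleAverage_def,
    ← intervalIntegral.integral_smul]
  congr 1 with t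
  have hexp : circleMap 0 1 t ^ n = Complex.exp (Complex.I * n * t) := by
    rw [circleMap_zero, Complex.ofReal_one, one_mul, ← Complex.exp_nat_mul]
    ring_nf
  simp only [Pi.smul_apply', hexp, Complex.real_smul]
  push_cast
  ring

lemma measurableEmbedding_complexOfReal : MeasurableEmbedding ((↑) : ℝ → ℂ) :=
  Complex.isometry_ofReal.isClosedEmbedding.measurableEmbedding

lemma ae_mem_ball_map_ofReal_restrict_Icc {ν : Measure ℝ}
    (hm1 : ν {(-1 : ℝ)} = 0) (h1 : ν {(1 : ℝ)} = 0) :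
    ∀ᵐ w ∂(ν.restrict (Icc (-1) 1)).map ((↑) : ℝ → ℂ), w ∈ Metric.ball (0 : ℂ) 1 := by
  rw [measurableEmbedding_complexOfReal.ae_map_iff,
    ← Measure.restrict_congr_set (Ioo_ae_eq_Icc' hm1 h1)]
  filter_upwards [ae_restrict_mem measurableSet_Ioo] with l hl
  simpa [abs_lt] using hl

/-- **Spectral density for reversible chains (part of Corollary 2.3).**
Let `ν` be a finite positive Borel measure on `[-1,1]` with no atoms at `±1`
(the transition spectral measure of a reversible Markov chain).  Then
`f(t) = (1/(2π)) ∫ (1-λ²)/(1+λ²-2λcos t) ν(dλ)` is nonnegative and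
integrable on `[0,2π]` and `∫ λⁿ ν(dλ) = ∫₀^{2π} e^{int} f(t) dt` for all
`n ≥ 0`, i.e. the spectral distribution function is absolutely continuous with
density `f`. -/
theorem reversible_spectral_density
    (ν : Measure ℝ) [IsFiniteMeasure ν]
    (hsupp : ν (Set.Icc (-1 : ℝ) 1)ᶜ = 0)
    (hm1 : ν {(-1 : ℝ)} = 0) (h1 : ν {(1 : ℝ)} = 0)
    (f : ℝ → ℝ)
    (hf : ∀ t : ℝ, f t = (1 / (2 * Real.pi)) *
      ∫ l in Set.Icc (-1 : ℝ) 1, (1 - l ^ 2) / (1 + l ^ 2 - 2 * l * Real.cos t) ∂ν) :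
    (∀ t : ℝ, 0 ≤ f t) ∧
    IntegrableOn f (Set.Ioc 0 (2 * Real.pi)) ∧
    ∀ n : ℕ,
      ((∫ l in Set.Icc (-1 : ℝ) 1, l ^ n ∂ν : ℝ) : ℂ) =
        ∫ t in (0:ℝ)..(2 * Real.pi), Complex.exp (Complex.I * n * t) * (f t : ℂ) := by
  simpa only [measurableEmbedding_complexOfReal.integral_map, ← Complex.ofReal_pow,
    integral_complex_ofReal] using
    reversible_spectral_density_general _ (ae_mem_ball_map_ofReal_restrict_Icc hm1 h1) f
      (by simpa only [measurableEmbedding_complexOfReal.integral_map,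
        poissonKernel_ofReal_circleMap] using hf)
end

section
/- Assume ν({−1}) = ν({1}) = 0 and define f(t) := (1/(2π)) ∫_{[−1,1]} (1−λ²)/(1+λ²−2λ·cos t) ν(dλ) and F(x) := ∫₀^x f(t) dt. Let α ∈ [1,2) and let h be slowly varying at infinity. Then Var_n ~ n^α h(n) as n → ∞ if and only if F(x) ~ (1/2)·C(α)·x^{2−α}·h(1/x) as x → 0⁺. -/
open MeasureTheory Filter Topology Set

/-- A function `h : (0,∞) → (0,∞)` is slowly varying at infinity: positive and
continuous on `(0,∞)` with `h(st)/h(t) → 1` as `t → ∞` for every `s > 0`. -/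
def SlowlyVaryingAtTop (h : ℝ → ℝ) : Prop :=
  (∀ t > 0, 0 < h t) ∧ ContinuousOn h (Set.Ioi 0) ∧
    ∀ s > 0, Tendsto (fun t => h (s * t) / h t) atTop (𝓝 1)

/-- `C(α) = Γ(1+α) sin(απ/2) / (π(2-α))`. -/
noncomputable def Cconst (α : ℝ) : ℝ :=
  Real.Gamma (1 + α) * Real.sin (α * Real.pi / 2) / (Real.pi * (2 - α))

/-- The variance sequence `Var_n = ∫ (n + 2 ∑_{k=1}^{n-1} (n-k) λ^k) ν(dλ)`. -/
noncomputable def VarSeqR (ν : Measure ℝ) (n : ℕ) : ℝ :=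
  ∫ l, ((n : ℝ) + 2 * ∑ k ∈ Finset.Ico 1 n, ((n : ℝ) - (k : ℝ)) * l ^ k) ∂ν

/-!
Put `v = (1 + λ) / (1 - λ)` and let `κ` be the image of `v ν(dλ)`. With `Q = varianceKernel` and
`A = arctanKernel`, `Var_n` is `n ∫ Q(v/n) κ(dv)` up to a bounded error, and `π F(x)` is
`T⁻¹ ∫ A(v/T) κ(dv)` for `T = cot (x/2)`. Write `α = 1 + ρ`. The theorem then says that
`∫ Q(v/T) κ(dv)` is asymptotic to a constant times `T ^ ρ h(T)` iff `∫ A(v/T) κ(dv)` is, and fixes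
the ratio of the constants.

The equivalence is Karamata's Tauberian argument. If one of the two kernels satisfies
`∫ g(v/T) κ(dv) ~ T ^ ρ h(T) ∫ g dm` with `m(dv) = ρ v ^ (ρ - 1) dv`, then so do its dilates. From
`Q` these give all products of a positive gauge with polynomials in `exp (-2/v)`; from `A`, all
products of `1 / (1 + v²)` with polynomials in `1 / (1 + v²)`. By Weierstrass' theorem a suitable
multiple of either kernel differs from the other one by a function approximable by such products,
with error small relative to the gauge. The constants `∫ Q dm` and `∫ A dm` follow by writing the
kernels as mixtures of dilates of simpler ones; the reflection formula gives their ratio.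
-/

lemma tendsto_div_const_mul_iff {ι : Type*} {l : Filter ι} {u v : ι → ℝ} {b c : ℝ} (hc : c ≠ 0) :
    Tendsto (fun i => u i / (c * v i)) l (𝓝 b) ↔ Tendsto (fun i => u i / v i) l (𝓝 (c * b)) := by
  rw [← tendsto_mul_iff_of_ne_zero (tendsto_const_nhds (x := c)) hc, mul_comm b c]
  refine tendsto_congr fun i => ?_
  rw [div_mul_eq_mul_div, mul_comm, mul_div_mul_left _ _ hc]

section UniformConvergence

variable {g : ℝ → ℝ}

/-- The Baire category argument behind Karamata's uniform convergence theorem. -/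
lemma exists_forall_abs_sub_le_of_tendsto_sub (hg : Continuous g)
    (hlim : ∀ u, Tendsto (fun x => g (x + u) - g x) atTop (𝓝 0)) {ε : ℝ} (hε : 0 < ε) :
    ∃ δ > 0, ∃ N : ℝ, ∀ x ≥ N, ∀ u, |u| < δ → |g (x + u) - g x| ≤ 2 * ε := by
  let S (N : ℕ) : Set ℝ := ⋂ x : ℝ, ⋂ _ : (N : ℝ) ≤ x, {u | |g (x + u) - g x| ≤ ε}
  have hS_mem {N u} : u ∈ S N ↔ ∀ x : ℝ, (N : ℝ) ≤ x → |g (x + u) - g x| ≤ ε := by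
    simp only [S, mem_iInter, mem_ofPred_eq]
  have hS_closed (N) : IsClosed (S N) :=
    isClosed_iInter fun x => isClosed_iInter fun _ => isClosed_le (by fun_prop) continuous_const
  have hS_cover : ⋃ N, S N = univ := by
    refine eq_univ_of_forall fun u => ?_
    obtain ⟨X, hX⟩ := eventually_atTop.1 <|
      (hlim u).abs.eventually_lt_const (u := ε) (by simpa using hε)
    obtain ⟨N, hN⟩ := exists_nat_ge X
    exact mem_iUnion.2 ⟨N, hS_mem.2 fun x hx => (hX x (hN.trans hx)).le⟩
  obtain ⟨N, u₀, hu₀⟩ := nonempty_interior_of_iUnion_of_closed hS_closed hS_cover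
  obtain ⟨δ, hδ, hball⟩ := Metric.mem_nhds_iff.1 (mem_interior_iff_mem_nhds.1 hu₀)
  have hnear (u) (hu : |u| < δ) (x : ℝ) (hx : N ≤ x) : |g (x + (u₀ + u)) - g x| ≤ ε :=
    hS_mem.1 (hball (by simpa [Real.dist_eq] using hu)) x hx
  refine ⟨δ, hδ, N + u₀, fun x hx u hu => ?_⟩
  have hxu := hnear u hu (x - u₀) (by linarith)
  have hx0 := hnear 0 (by simpa using hδ) (x - u₀) (by linarith)
  rw [show x - u₀ + (u₀ + u) = x + u by ring, abs_le] at hxu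
  rw [show x - u₀ + (u₀ + 0) = x by ring, abs_le] at hx0
  rw [abs_le]
  constructor <;> linarith

lemma tendsto_sub_of_tendsto_sub {ρ : ℝ} (hg : Continuous g)
    (hlim : ∀ u, Tendsto (fun x => g (x + u) - g x) atTop (𝓝 (ρ * u)))
    {ι : Type*} {l : Filter ι} {x u : ι → ℝ} {u₀ : ℝ}
    (hx : Tendsto x l atTop) (hu : Tendsto u l (𝓝 u₀)) :
    Tendsto (fun i => g (x i + u i) - g (x i)) l (𝓝 (ρ * u₀)) := by
  let k (y : ℝ) : ℝ := g y - ρ * y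
  have hk (w) : Tendsto (fun y => k (y + w) - k y) atTop (𝓝 0) := by
    have h := (hlim w).sub_const (ρ * w)
    rw [sub_self] at h
    exact h.congr fun y => by simp only [k]; ring
  have hsmall : Tendsto (fun i => k (x i + u i) - k (x i + u₀)) l (𝓝 0) := by
    refine Metric.tendsto_nhds.2 fun ε hε => ?_
    obtain ⟨δ, hδ, N, hN⟩ :=
      exists_forall_abs_sub_le_of_tendsto_sub (by fun_prop) hk (show 0 < ε / 4 by positivity)
    filter_upwards [(tendsto_atTop_add_const_right l u₀ hx).eventually_ge_atTop N,
      Metric.tendsto_nhds.1 hu δ hδ] with i hxi hui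
    have h := hN _ hxi (u i - u₀) hui
    rw [show x i + u₀ + (u i - u₀) = x i + u i by ring] at h
    rw [Real.dist_eq, sub_zero]
    linarith
  have h := (hsmall.add ((hk u₀).comp hx)).add (hu.const_mul ρ)
  rw [add_zero, zero_add] at h
  exact h.congr fun i => by simp only [k, Function.comp_apply]; ring

lemma tendsto_atTop_of_tendsto_sub {c : ℝ} (hc : 0 < c) (hg : Continuous g)
    (hlim : Tendsto (fun x => g (x + 1) - g x) atTop (𝓝 c)) : Tendsto g atTop atTop := by
  obtain ⟨N, hN⟩ := eventually_atTop.1 (hlim.eventually_const_lt (half_lt_self hc))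
  obtain ⟨b, -, hb⟩ := (isCompact_Icc (a := N) (b := N + 1)).exists_isMinOn
    (nonempty_Icc.2 (by linarith)) hg.continuousOn
  have hiter (k : ℕ) (x) (hx : N ≤ x) : g x + k * (c / 2) ≤ g (x + k) := by
    induction k with
    | zero => simp
    | succ k ih =>
      have h := hN (x + k) (by linarith [k.cast_nonneg (α := ℝ)])
      push_cast
      rw [← add_assoc]
      linarith
  have hlinear : Tendsto (fun x => g b + (x - (N + 1)) * (c / 2)) atTop atTop :=
    tendsto_atTop_add_const_left _ _ <|
      (tendsto_atTop_add_const_right _ _ tendsto_id).atTop_mul_const (half_pos hc)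
  refine tendsto_atTop_mono' _ ?_ hlinear
  filter_upwards [eventually_ge_atTop N] with x hx
  have hfloor := Nat.floor_le (sub_nonneg.2 hx)
  have hfloor' := Nat.lt_floor_add_one (x - N)
  have hmin : g b ≤ g (x - ⌊x - N⌋₊) := hb ⟨by linarith, by linarith⟩
  have h := hiter ⌊x - N⌋₊ (x - ⌊x - N⌋₊) (by linarith)
  rw [sub_add_cancel] at h
  calc g b + (x - (N + 1)) * (c / 2) ≤ g b + ⌊x - N⌋₊ * (c / 2) := by gcongr; linarith
    _ ≤ g x := by linarith

end UniformConvergence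

/-- `H` is regularly varying at infinity with index `ρ`. As in `SlowlyVaryingAtTop`, continuity
takes the place of the customary measurability. -/
structure RegularlyVaryingAtTop (H : ℝ → ℝ) (ρ : ℝ) : Prop where
  pos : ∀ t > 0, 0 < H t
  continuousOn : ContinuousOn H (Ioi 0)
  tendsto_div : ∀ s > 0, Tendsto (fun t => H (s * t) / H t) atTop (𝓝 (s ^ ρ))

lemma SlowlyVaryingAtTop.rpow_mul {h : ℝ → ℝ} (hh : SlowlyVaryingAtTop h) (ρ : ℝ) :
    RegularlyVaryingAtTop (fun t => t ^ ρ * h t) ρ where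
  pos t ht := mul_pos (Real.rpow_pos_of_pos ht ρ) (hh.1 t ht)
  continuousOn :=
    (continuousOn_id.rpow_const fun _ ht => .inl (ne_of_gt ht)).mul hh.2.1
  tendsto_div s hs := by
    have hlim := (hh.2.2 s hs).const_mul (s ^ ρ)
    rw [mul_one] at hlim
    refine hlim.congr' ?_
    filter_upwards [eventually_gt_atTop 0] with t ht
    rw [Real.mul_rpow hs.le ht.le]
    have := (Real.rpow_pos_of_pos ht ρ).ne'
    field_simp

namespace RegularlyVaryingAtTop

variable {H : ℝ → ℝ} {ρ : ℝ}

lemma id_mul (hH : RegularlyVaryingAtTop H ρ) :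
    RegularlyVaryingAtTop (fun t => t * H t) (1 + ρ) where
  pos t ht := mul_pos ht (hH.pos t ht)
  continuousOn := continuousOn_id.mul hH.continuousOn
  tendsto_div s hs := by
    rw [Real.rpow_add hs, Real.rpow_one]
    refine ((hH.tendsto_div s hs).const_mul s).congr' ?_
    filter_upwards [eventually_gt_atTop 0] with t ht
    rw [mul_div_mul_comm, mul_div_cancel_right₀ _ ht.ne']

lemma const_mul (hH : RegularlyVaryingAtTop H ρ) {c : ℝ} (hc : 0 < c) :
    RegularlyVaryingAtTop (fun t => c * H t) ρ where
  pos t ht := mul_pos hc (hH.pos t ht)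
  continuousOn := hH.continuousOn.const_mul c
  tendsto_div s hs := (hH.tendsto_div s hs).congr fun _ => (mul_div_mul_left _ _ hc.ne').symm

lemma continuous_log_comp_exp (hH : RegularlyVaryingAtTop H ρ) :
    Continuous fun x => Real.log (H (Real.exp x)) :=
  (hH.continuousOn.comp_continuous Real.continuous_exp Real.exp_pos).log
    fun x => (hH.pos _ (Real.exp_pos x)).ne'

lemma tendsto_log_comp_exp_sub (hH : RegularlyVaryingAtTop H ρ) (u : ℝ) :
    Tendsto (fun x => Real.log (H (Real.exp (x + u))) - Real.log (H (Real.exp x))) atTop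
      (𝓝 (ρ * u)) := by
  have hlim := ((hH.tendsto_div _ (Real.exp_pos u)).comp Real.tendsto_exp_atTop).log
    (Real.rpow_pos_of_pos (Real.exp_pos u) ρ).ne'
  rw [Real.log_rpow (Real.exp_pos u), Real.log_exp] at hlim
  refine hlim.congr fun x => ?_
  have hx := Real.exp_pos x
  rw [Function.comp_apply, Real.log_div (hH.pos _ (by positivity)).ne' (hH.pos _ hx).ne',
    add_comm x, Real.exp_add]

lemma tendsto_div_of_tendsto_div (hH : RegularlyVaryingAtTop H ρ) {s : ℝ} (hs : 0 < s)
    {ι : Type*} {l : Filter ι} {a b : ι → ℝ} (ha : Tendsto a l atTop)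
    (hab : Tendsto (fun i => b i / a i) l (𝓝 s)) :
    Tendsto (fun i => H (b i) / H (a i)) l (𝓝 (s ^ ρ)) := by
  have hlog := tendsto_sub_of_tendsto_sub hH.continuous_log_comp_exp hH.tendsto_log_comp_exp_sub
    (Real.tendsto_log_atTop.comp ha) (hab.log hs.ne')
  have hexp := (Real.continuous_exp.tendsto _).comp hlog
  rw [← Real.log_rpow hs, Real.exp_log (Real.rpow_pos_of_pos hs ρ)] at hexp
  refine hexp.congr' ?_
  filter_upwards [ha.eventually_gt_atTop 0, hab.eventually_const_lt hs] with i hai hi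
  have hbi : 0 < b i := (div_pos_iff_of_pos_right hai).1 hi
  simp only [Function.comp_apply]
  rw [← Real.log_mul hai.ne' hi.ne', mul_div_cancel₀ _ hai.ne', Real.exp_log hai, Real.exp_log hbi,
    Real.exp_sub, Real.exp_log (hH.pos _ hai), Real.exp_log (hH.pos _ hbi)]

lemma tendsto_atTop (hH : RegularlyVaryingAtTop H ρ) (hρ : 0 < ρ) : Tendsto H atTop atTop := by
  have hlog := tendsto_atTop_of_tendsto_sub (by simpa using hρ) hH.continuous_log_comp_exp
    (hH.tendsto_log_comp_exp_sub 1)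
  refine (Real.tendsto_exp_atTop.comp (hlog.comp Real.tendsto_log_atTop)).congr' ?_
  filter_upwards [eventually_gt_atTop 0] with t ht
  simp only [Function.comp_apply, Real.exp_log ht, Real.exp_log (hH.pos t ht)]

lemma tendsto_div_atTop_of_monotoneOn (hH : RegularlyVaryingAtTop H ρ) {G : ℝ → ℝ} {c : ℝ}
    (hG : MonotoneOn G (Ioi 0)) (hlim : Tendsto (fun n : ℕ => G n / H n) atTop (𝓝 c)) :
    Tendsto (fun T => G T / H T) atTop (𝓝 c) := by
  have along {k : ℝ → ℕ} (hk : Tendsto k atTop atTop)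
      (hratio : Tendsto (fun T => (k T : ℝ) / T) atTop (𝓝 1)) :
      Tendsto (fun T => G (k T) / H T) atTop (𝓝 c) := by
    have h := (hlim.comp hk).mul (hH.tendsto_div_of_tendsto_div one_pos tendsto_id hratio)
    rw [Real.one_rpow, mul_one] at h
    refine h.congr' ?_
    filter_upwards [hk.eventually_gt_atTop 0] with T hT
    exact div_mul_div_cancel₀ (hH.pos _ (Nat.cast_pos.2 hT)).ne'
  have hlower := along tendsto_nat_floor_atTop tendsto_nat_floor_div_atTop
  have hupper := along tendsto_nat_ceil_atTop tendsto_nat_ceil_div_atTop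
  refine tendsto_of_tendsto_of_tendsto_of_le_of_le' hlower hupper ?_ ?_
  · filter_upwards [eventually_ge_atTop 1] with T hT
    have hT₀ : 0 < T := one_pos.trans_le hT
    have hfloor : (0 : ℝ) < ⌊T⌋₊ := Nat.cast_pos.2 (Nat.floor_pos.2 hT)
    have := hH.pos T hT₀
    gcongr
    exact hG hfloor hT₀ (Nat.floor_le hT₀.le)
  · filter_upwards [eventually_gt_atTop 0] with T hT
    have hceil : (0 : ℝ) < ⌈T⌉₊ := Nat.cast_pos.2 (Nat.ceil_pos.2 hT)
    have := hH.pos T hT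
    gcongr
    exact hG hT hceil (Nat.le_ceil T)

end RegularlyVaryingAtTop

/-- The measure `ρ v^(ρ-1) dv` on `(0,∞)`, homogeneous of degree `ρ`. For `ρ = 0` it is the Dirac
mass at `0`, which is its weak limit as `ρ → 0`. -/
noncomputable def powerMeasure (ρ : ℝ) : Measure ℝ :=
  if ρ = 0 then Measure.dirac 0
  else (volume.restrict (Ioi 0)).withDensity fun v => ENNReal.ofReal (ρ * v ^ (ρ - 1))

section PowerMeasure

variable {ρ : ℝ} {g : ℝ → ℝ}

@[simp]
lemma powerMeasure_zero : powerMeasure 0 = Measure.dirac 0 := if_pos rfl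

lemma ae_powerMeasure_nonneg : ∀ᵐ v ∂powerMeasure ρ, 0 ≤ v := by
  rcases eq_or_ne ρ 0 with rfl | hρ
  · simp [ae_dirac_eq]
  · rw [powerMeasure, if_neg hρ]
    exact (withDensity_absolutelyContinuous _ _).ae_le <|
      (ae_restrict_mem measurableSet_Ioi).mono fun v hv => hv.le

lemma integral_powerMeasure (hρ : 0 < ρ) :
    ∫ v, g v ∂powerMeasure ρ = ∫ v in Ioi 0, ρ * v ^ (ρ - 1) * g v := by
  rw [powerMeasure, if_neg hρ.ne', integral_withDensity_eq_integral_toReal_smul (by fun_prop)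
    (.of_forall fun _ => ENNReal.ofReal_lt_top)]
  refine setIntegral_congr_fun measurableSet_Ioi fun v (hv : 0 < v) => ?_
  simp only [smul_eq_mul]
  rw [ENNReal.toReal_ofReal (by positivity)]

lemma integrable_powerMeasure_iff (hρ : 0 < ρ) :
    Integrable g (powerMeasure ρ) ↔ IntegrableOn (fun v => ρ * v ^ (ρ - 1) * g v) (Ioi 0) := by
  rw [powerMeasure, if_neg hρ.ne', integrable_withDensity_iff_integrable_smul₀' (by fun_prop)
    (.of_forall fun _ => ENNReal.ofReal_lt_top)]
  refine integrableOn_congr_fun (fun v (hv : 0 < v) => ?_) measurableSet_Ioi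
  simp only [smul_eq_mul]
  rw [ENNReal.toReal_ofReal (by positivity)]

lemma rpow_density_mul_comp_mul {y v : ℝ} (hy : 0 < y) (hv : 0 < v) :
    ρ * v ^ (ρ - 1) * g (y * v) =
      y ^ (1 - ρ) * (ρ * (y * v) ^ (ρ - 1) * g (y * v)) := by
  rw [Real.mul_rpow hy.le hv.le, show 1 - ρ = -(ρ - 1) by ring, Real.rpow_neg hy.le]
  have := Real.rpow_pos_of_pos hy (ρ - 1)
  field_simp

lemma integral_comp_mul_powerMeasure (hρ : 0 ≤ ρ) {y : ℝ} (hy : 0 < y) :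
    ∫ v, g (y * v) ∂powerMeasure ρ = y ^ (-ρ) * ∫ v, g v ∂powerMeasure ρ := by
  rcases hρ.eq_or_lt with rfl | hρ
  · simp
  calc ∫ v, g (y * v) ∂powerMeasure ρ
      = ∫ v in Ioi 0, y ^ (1 - ρ) * (ρ * (y * v) ^ (ρ - 1) * g (y * v)) := by
        rw [integral_powerMeasure hρ]
        exact setIntegral_congr_fun measurableSet_Ioi fun v hv => rpow_density_mul_comp_mul hy hv
    _ = y ^ (1 - ρ) * (y⁻¹ * ∫ v in Ioi 0, ρ * v ^ (ρ - 1) * g v) := by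
        rw [integral_const_mul,
          integral_comp_mul_left_Ioi (fun v => ρ * v ^ (ρ - 1) * g v) 0 hy, mul_zero, smul_eq_mul]
    _ = y ^ (-ρ) * ∫ v, g v ∂powerMeasure ρ := by
        rw [integral_powerMeasure hρ, ← mul_assoc, ← Real.rpow_neg_one, ← Real.rpow_add hy]
        ring_nf

lemma integrable_comp_mul_powerMeasure (hρ : 0 ≤ ρ) {y : ℝ} (hy : 0 < y)
    (hg : Integrable g (powerMeasure ρ)) : Integrable (fun v => g (y * v)) (powerMeasure ρ) := by
  rcases hρ.eq_or_lt with rfl | hρ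
  · rw [powerMeasure_zero]
    exact integrable_dirac (by simp)
  rw [integrable_powerMeasure_iff hρ] at hg ⊢
  have hscaled := (integrableOn_Ioi_comp_mul_left_iff (fun v => ρ * v ^ (ρ - 1) * g v) 0 hy).2
    (by rwa [mul_zero])
  exact (integrableOn_congr_fun (fun v hv => rpow_density_mul_comp_mul hy hv) measurableSet_Ioi).2
    (hscaled.const_mul (y ^ (1 - ρ)))

lemma integrable_inv_one_add_powerMeasure (hρ : 0 ≤ ρ) (hρ₁ : ρ < 1) :
    Integrable (fun v => (1 + v)⁻¹) (powerMeasure ρ) := by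
  rcases hρ.eq_or_lt with rfl | hρ
  · rw [powerMeasure_zero]
    exact integrable_dirac (by simp)
  have hcont : ContinuousOn (fun v : ℝ => (1 + v)⁻¹) (Ioi 0) :=
    (continuousOn_const.add continuousOn_id).inv₀ fun v hv => (add_pos one_pos hv).ne'
  have hbound (v : ℝ) (hv : 0 < v) (s : ℝ) (hs : (1 + v)⁻¹ ≤ v ^ (-s)) :
      ‖(1 + v)⁻¹‖ ≤ 1 * ‖v ^ (-s)‖ := by
    rwa [one_mul, Real.norm_of_nonneg (by positivity), Real.norm_of_nonneg (by positivity)]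
  have hmellin := mellin_convergent_of_isBigO_scalar (s := ρ) (a := 1) (b := 0)
    (hcont.locallyIntegrableOn measurableSet_Ioi)
    (.of_bound 1 <| (eventually_gt_atTop 0).mono fun v hv => hbound v hv 1 <| by
      rw [Real.rpow_neg_one]; gcongr; linarith) hρ₁
    (.of_bound 1 <| eventually_mem_nhdsWithin.mono fun v (hv : 0 < v) => hbound v hv 0 <| by
      rw [neg_zero, Real.rpow_zero]; exact inv_le_one_of_one_le₀ (by linarith)) hρ
  rw [integrable_powerMeasure_iff hρ]
  simp only [mul_assoc]
  exact hmellin.const_mul ρ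

end PowerMeasure

section Integrability

variable {μ : Measure ℝ} {g : ℝ → ℝ} {C : ℝ}

lemma integrable_of_abs_le_inv_one_add (hμ : ∀ᵐ v ∂μ, 0 ≤ v)
    (hint : Integrable (fun v => (1 + v)⁻¹) μ) (hg : Measurable g)
    (hgC : ∀ v, 0 ≤ v → |g v| ≤ C * (1 + v)⁻¹) : Integrable g μ :=
  (hint.const_mul C).mono' hg.aestronglyMeasurable (hμ.mono hgC)

lemma integrable_comp_div_of_abs_le_inv_one_add (hμ : ∀ᵐ v ∂μ, 0 ≤ v)
    (hint : Integrable (fun v => (1 + v)⁻¹) μ) (hg : Measurable g)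
    (hgC : ∀ v, 0 ≤ v → |g v| ≤ C * (1 + v)⁻¹) {T : ℝ} (hT : 0 < T) :
    Integrable (fun v => g (v / T)) μ := by
  refine integrable_of_abs_le_inv_one_add (C := C * (1 + T)) hμ hint
    (hg.comp (measurable_id.div_const T)) fun v hv => (hgC _ (by positivity)).trans ?_
  have hC : 0 ≤ C := by simpa using (abs_nonneg _).trans (hgC 0 le_rfl)
  rw [mul_assoc]
  gcongr
  field_simp
  nlinarith

lemma integrable_of_abs_sub_le {g' k : ℝ → ℝ} (hg : AEStronglyMeasurable g μ)
    (hg' : Integrable g' μ) (hk : Integrable k μ) (hbound : ∀ᵐ v ∂μ, |g v - g' v| ≤ k v) :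
    Integrable g μ := by
  have hdiff : Integrable (fun v => g v - g' v) μ := hk.mono' (hg.sub hg'.1) hbound
  exact (hdiff.add hg').congr (.of_forall fun v => sub_add_cancel (g v) (g' v))

lemma abs_integral_sub_le {g' k : ℝ → ℝ} (hg : Integrable g μ) (hg' : Integrable g' μ)
    (hk : Integrable k μ) (hbound : ∀ᵐ v ∂μ, |g v - g' v| ≤ k v) :
    |∫ v, g v ∂μ - ∫ v, g' v ∂μ| ≤ ∫ v, k v ∂μ := by
  rw [← integral_sub hg hg']
  exact norm_integral_le_of_norm_le (f := fun v => g v - g' v) hk hbound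

end Integrability

/-- The kernel `g` obeys the scaling limit `H(T)⁻¹ ∫ g(v/T) κ(dv) → ∫ g dm` as `T → ∞`. The
kernels doing so form a linear space closed under the operations needed to pass from one kernel
to another in the Tauberian argument. -/
structure HasScalingLimit (κ m : Measure ℝ) (H g : ℝ → ℝ) : Prop where
  integrable : Integrable g m
  integrable_comp_div : ∀ T > 0, Integrable (fun v => g (v / T)) κ
  tendsto : Tendsto (fun T => (∫ v, g (v / T) ∂κ) / H T) atTop (𝓝 (∫ v, g v ∂m))

namespace HasScalingLimit

variable {κ m : Measure ℝ} {H g g' k : ℝ → ℝ}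

lemma of_abs_le_inv_one_add (hκ : ∀ᵐ v ∂κ, 0 ≤ v) (hm : ∀ᵐ v ∂m, 0 ≤ v)
    (hκ_int : Integrable (fun v => (1 + v)⁻¹) κ) (hm_int : Integrable (fun v => (1 + v)⁻¹) m)
    (hg : Measurable g) {C : ℝ} (hgC : ∀ v, 0 ≤ v → |g v| ≤ C * (1 + v)⁻¹)
    (hlim : Tendsto (fun T => (∫ v, g (v / T) ∂κ) / H T) atTop (𝓝 (∫ v, g v ∂m))) :
    HasScalingLimit κ m H g where
  integrable := integrable_of_abs_le_inv_one_add hm hm_int hg hgC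
  integrable_comp_div _ hT := integrable_comp_div_of_abs_le_inv_one_add hκ hκ_int hg hgC hT
  tendsto := hlim

lemma add (hg : HasScalingLimit κ m H g) (hg' : HasScalingLimit κ m H g') :
    HasScalingLimit κ m H fun v => g v + g' v where
  integrable := hg.integrable.add hg'.integrable
  integrable_comp_div T hT := (hg.integrable_comp_div T hT).add (hg'.integrable_comp_div T hT)
  tendsto := by
    rw [integral_add hg.integrable hg'.integrable]
    refine (hg.tendsto.add hg'.tendsto).congr' ?_
    filter_upwards [eventually_gt_atTop 0] with T hT
    rw [integral_add (hg.integrable_comp_div T hT) (hg'.integrable_comp_div T hT), add_div]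

lemma const_mul (hg : HasScalingLimit κ m H g) (c : ℝ) :
    HasScalingLimit κ m H fun v => c * g v where
  integrable := hg.integrable.const_mul c
  integrable_comp_div T hT := (hg.integrable_comp_div T hT).const_mul c
  tendsto := by
    simp only [integral_const_mul, mul_div_assoc]
    exact hg.tendsto.const_mul c

lemma sub (hg : HasScalingLimit κ m H g) (hg' : HasScalingLimit κ m H g') :
    HasScalingLimit κ m H fun v => g v - g' v := by
  simpa only [neg_one_mul, ← sub_eq_add_neg] using hg.add (hg'.const_mul (-1))

lemma finset_sum {ι : Type*} (s : Finset ι) {g : ι → ℝ → ℝ}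
    (hg : ∀ i ∈ s, HasScalingLimit κ m H (g i)) :
    HasScalingLimit κ m H fun v => ∑ i ∈ s, g i v := by
  classical
  induction s using Finset.induction_on with
  | empty => exact ⟨by simp, by simp, by simp⟩
  | insert i s hi ih =>
    simp only [Finset.sum_insert hi]
    exact (hg i (Finset.mem_insert_self i s)).add
      (ih fun j hj => hg j (Finset.mem_insert_of_mem hj))

lemma polynomial_eval (e x : ℝ → ℝ)
    (hpow : ∀ n : ℕ, HasScalingLimit κ m H fun v => e v * x v ^ n) (p : Polynomial ℝ) :
    HasScalingLimit κ m H fun v => e v * p.eval (x v) := by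
  simp only [Polynomial.eval_eq_sum_range, Finset.mul_sum, mul_left_comm (e _)]
  exact finset_sum _ fun n _ => (hpow n).const_mul (p.coeff n)

lemma comp_mul {ρ : ℝ} (hρ : 0 ≤ ρ) (hH : RegularlyVaryingAtTop H ρ)
    (hg : HasScalingLimit κ (powerMeasure ρ) H g) {y : ℝ} (hy : 0 < y) :
    HasScalingLimit κ (powerMeasure ρ) H fun v => g (y * v) where
  integrable := integrable_comp_mul_powerMeasure hρ hy hg.integrable
  integrable_comp_div T hT := by
    simpa only [div_div_eq_mul_div, mul_comm, ← mul_div_assoc]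
      using hg.integrable_comp_div (T / y) (by positivity)
  tendsto := by
    rw [integral_comp_mul_powerMeasure hρ hy, mul_comm, Real.rpow_neg hy.le,
      ← Real.inv_rpow hy.le]
    refine ((hg.tendsto.comp (tendsto_id.const_mul_atTop (inv_pos.2 hy))).mul
      (hH.tendsto_div _ (inv_pos.2 hy))).congr' ?_
    filter_upwards [eventually_gt_atTop 0] with T hT
    rw [Function.comp_apply, id, div_mul_div_cancel₀ (hH.pos _ (by positivity)).ne']
    congr 2 with v
    congr 1
    field_simp

lemma of_forall_approx (hκ : ∀ᵐ v ∂κ, 0 ≤ v) (hm : ∀ᵐ v ∂m, 0 ≤ v) (hH : ∀ T > 0, 0 < H T)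
    (hg : Measurable g) (hk : HasScalingLimit κ m H k)
    (happrox : ∀ ε > 0, ∃ g', HasScalingLimit κ m H g' ∧ ∀ v, 0 ≤ v → |g v - g' v| ≤ ε * k v) :
    HasScalingLimit κ m H g := by
  have hκ_div {T : ℝ} (hT : 0 < T) : ∀ᵐ v ∂κ, 0 ≤ v / T := hκ.mono fun v hv => by positivity
  have hg_div (T : ℝ) : Measurable fun v => g (v / T) := hg.comp (measurable_id.div_const T)
  obtain ⟨g₁, hg₁, hbound₁⟩ := happrox 1 one_pos
  have hint : Integrable g m := integrable_of_abs_sub_le hg.aestronglyMeasurable hg₁.integrable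
    (hk.integrable.const_mul 1) (hm.mono hbound₁)
  have hint_div (T : ℝ) (hT : 0 < T) : Integrable (fun v => g (v / T)) κ :=
    integrable_of_abs_sub_le (hg_div T).aestronglyMeasurable (hg₁.integrable_comp_div T hT)
      ((hk.integrable_comp_div T hT).const_mul 1) ((hκ_div hT).mono fun v => hbound₁ _)
  refine ⟨hint, hint_div, Metric.tendsto_nhds.2 fun δ hδ => ?_⟩
  set K := ∫ v, k v ∂m
  have hK : K < |K| + 1 := (le_abs_self K).trans_lt (lt_add_one _)
  have hε : 0 < δ / (4 * (|K| + 1)) := by positivity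
  have hε_mul {x : ℝ} (hx : x < |K| + 1) : δ / (4 * (|K| + 1)) * x < δ / 4 := by
    rw [← div_div, div_mul_eq_mul_div, div_lt_iff₀ (by positivity)]
    gcongr
  obtain ⟨g', hg', hbound⟩ := happrox _ hε
  filter_upwards [eventually_gt_atTop 0, hk.tendsto.eventually_lt_const hK,
    Metric.tendsto_nhds.1 hg'.tendsto (δ / 2) (by positivity)] with T hT hkT hg'T
  have hleft : |(∫ v, g (v / T) ∂κ) / H T - (∫ v, g' (v / T) ∂κ) / H T|
      ≤ δ / (4 * (|K| + 1)) * ((∫ v, k (v / T) ∂κ) / H T) := by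
    rw [← sub_div, abs_div, abs_of_pos (hH T hT), ← mul_div_assoc, ← integral_const_mul]
    gcongr
    · exact (hH T hT).le
    · exact abs_integral_sub_le (hint_div T hT) (hg'.integrable_comp_div T hT)
        ((hk.integrable_comp_div T hT).const_mul _) ((hκ_div hT).mono fun v => hbound _)
  have hright : |∫ v, g v ∂m - ∫ v, g' v ∂m| ≤ δ / (4 * (|K| + 1)) * K := by
    rw [← integral_const_mul]
    exact abs_integral_sub_le hint hg'.integrable (hk.integrable.const_mul _) (hm.mono hbound)
  have hk_small := hε_mul hkT
  have hK_small := hε_mul hK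
  rw [Real.dist_eq, abs_lt] at *
  rw [abs_le] at hleft hright
  constructor <;> linarith

end HasScalingLimit

section ArctanKernel

lemma hasDerivAt_arctan_inv (x : ℝ) : HasDerivAt Real.arctan (1 + x ^ 2)⁻¹ x := by
  simpa only [one_div] using Real.hasDerivAt_arctan x

lemma arctan_sub_arctan_mem_Icc {a b : ℝ} (ha : 0 ≤ a) (hab : a ≤ b) :
    Real.arctan b - Real.arctan a ∈
      Icc ((1 + b ^ 2)⁻¹ * (b - a)) ((1 + a ^ 2)⁻¹ * (b - a)) := by
  have hdiff : Differentiable ℝ Real.arctan := Real.differentiable_arctan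
  constructor
  · refine (convex_Icc a b).mul_sub_le_image_sub_of_le_deriv hdiff.continuous.continuousOn
      hdiff.differentiableOn (fun x hx => ?_) a (left_mem_Icc.2 hab) b (right_mem_Icc.2 hab) hab
    rw [interior_Icc] at hx
    rw [(hasDerivAt_arctan_inv x).deriv]
    have := ha.trans hx.1.le
    gcongr
    exact hx.2.le
  · refine (convex_Icc a b).image_sub_le_mul_sub_of_deriv_le hdiff.continuous.continuousOn
      hdiff.differentiableOn (fun x hx => ?_) a (left_mem_Icc.2 hab) b (right_mem_Icc.2 hab) hab
    rw [interior_Icc] at hx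
    rw [(hasDerivAt_arctan_inv x).deriv]
    gcongr
    exact hx.1.le

/-- The kernel `arctan v / v`, extended by `1` at `v = 0`; it carries the spectral distribution
function. -/
noncomputable def arctanKernel : ℝ → ℝ := dslope Real.arctan 0

lemma continuous_arctanKernel : Continuous arctanKernel :=
  continuousOn_univ.1 <| (continuousOn_dslope univ_mem).2
    ⟨Real.continuous_arctan.continuousOn, Real.differentiableAt_arctan 0⟩

@[simp]
lemma arctanKernel_zero : arctanKernel 0 = 1 := by
  simp [arctanKernel, dslope_same]

lemma mul_arctanKernel (v : ℝ) : v * arctanKernel v = Real.arctan v := by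
  simpa [arctanKernel] using sub_smul_dslope Real.arctan 0 v

lemma arctanKernel_mem_Icc {v : ℝ} (hv : 0 ≤ v) : arctanKernel v ∈ Icc (1 + v ^ 2)⁻¹ 1 := by
  rcases hv.eq_or_lt with rfl | hv
  · simp
  have h := arctan_sub_arctan_mem_Icc le_rfl hv.le
  simp only [Real.arctan_zero, sub_zero, ← mul_arctanKernel v] at h
  rw [mul_comm v, zero_pow two_ne_zero, add_zero, inv_one] at h
  exact ⟨le_of_mul_le_mul_right h.1 hv, le_of_mul_le_mul_right h.2 hv⟩

lemma abs_arctanKernel_le {v : ℝ} (hv : 0 ≤ v) :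
    |arctanKernel v| ≤ (1 + Real.pi / 2) * (1 + v)⁻¹ := by
  have hmem := arctanKernel_mem_Icc hv
  rw [abs_of_nonneg ((by positivity : (0 : ℝ) ≤ (1 + v ^ 2)⁻¹).trans hmem.1),
    ← div_eq_mul_inv, le_div_iff₀ (by positivity), mul_add, mul_one, mul_comm _ v,
    mul_arctanKernel]
  exact add_le_add hmem.2 (Real.arctan_lt_pi_div_two v).le

lemma tendsto_mul_arctanKernel_atTop :
    Tendsto (fun v => v * arctanKernel v) atTop (𝓝 (Real.pi / 2)) := by
  simp only [mul_arctanKernel]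
  exact Real.tendsto_arctan_atTop.mono_right nhdsWithin_le_nhds

end ArctanKernel

section VarianceKernel

/-- The kernel of the variance: for `v = (1 + l) / (1 - l)`, the quantity
`n * (v * varianceKernel (v / n))` differs from `n + 2 * ∑ 1 ≤ k < n, (n - k) * l ^ k` by a bounded
amount. At `v = 0`, where `2 / 0 = 0`, the value `1` agrees with the limit at `0⁺`. -/
noncomputable def varianceKernel (v : ℝ) : ℝ := 1 - v / 2 * (1 - Real.exp (-(2 / v)))

@[simp]
lemma varianceKernel_zero : varianceKernel 0 = 1 := by simp [varianceKernel]

lemma measurable_varianceKernel : Measurable varianceKernel := by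
  unfold varianceKernel
  fun_prop

lemma exp_neg_le_quadratic {b : ℝ} (hb : 0 ≤ b) : Real.exp (-b) ≤ 1 - b + b ^ 2 / 2 := by
  have hinv : Real.exp (-b) * (1 + b + b ^ 2 / 2) ≤ 1 := by
    rw [Real.exp_neg, inv_mul_le_one₀ (Real.exp_pos b)]
    exact Real.quadratic_le_exp_of_nonneg hb
  have hprod : 1 ≤ (1 - b + b ^ 2 / 2) * (1 + b + b ^ 2 / 2) := by nlinarith [sq_nonneg (b ^ 2)]
  exact le_of_mul_le_mul_right (hinv.trans hprod) (by positivity)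

lemma one_sub_varianceKernel_mem_Icc {v : ℝ} (hv : 0 ≤ v) :
    1 - varianceKernel v ∈ Icc 0 (v / 2) := by
  have hexp : Real.exp (-(2 / v)) ≤ 1 := Real.exp_le_one_iff.2 (by simpa using by positivity)
  rw [varianceKernel, sub_sub_cancel]
  exact ⟨mul_nonneg (by positivity) (by linarith),
    mul_le_of_le_one_right (by positivity) (by linarith [Real.exp_pos (-(2 / v))])⟩

lemma varianceKernel_nonneg {v : ℝ} (hv : 0 ≤ v) : 0 ≤ varianceKernel v := by
  rcases hv.eq_or_lt with rfl | hv
  · simp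
  have h := Real.one_sub_le_exp_neg (2 / v)
  have : v / 2 * (1 - Real.exp (-(2 / v))) ≤ v / 2 * (2 / v) := by gcongr; linarith
  rw [div_mul_div_cancel₀' hv.ne', div_self two_ne_zero] at this
  rw [varianceKernel]
  linarith

lemma mul_varianceKernel_le_one {v : ℝ} (hv : 0 ≤ v) : v * varianceKernel v ≤ 1 := by
  rcases hv.eq_or_lt with rfl | hv
  · simp
  have h := mul_le_mul_of_nonneg_left (exp_neg_le_quadratic (b := 2 / v) (by positivity))
    (sq_nonneg v)
  rw [varianceKernel]
  field_simp at h ⊢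
  nlinarith

lemma abs_varianceKernel_le {v : ℝ} (hv : 0 ≤ v) : |varianceKernel v| ≤ 2 * (1 + v)⁻¹ := by
  rw [abs_of_nonneg (varianceKernel_nonneg hv), ← div_eq_mul_inv, le_div_iff₀ (by positivity)]
  linarith [mul_varianceKernel_le_one hv, (one_sub_varianceKernel_mem_Icc hv).1]

lemma continuousOn_varianceKernel : ContinuousOn varianceKernel (Ici 0) := by
  intro v (hv : 0 ≤ v)
  rcases hv.eq_or_lt with rfl | hv
  · have hlim : Tendsto (fun v => 1 - varianceKernel v) (𝓝[≥] 0) (𝓝 0) := by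
      refine squeeze_zero' (g := fun v => v / 2)
        (eventually_mem_nhdsWithin.mono fun v hv => (one_sub_varianceKernel_mem_Icc hv).1)
        (eventually_mem_nhdsWithin.mono fun v hv => (one_sub_varianceKernel_mem_Icc hv).2) ?_
      exact tendsto_nhdsWithin_of_tendsto_nhds <| by
        simpa using (continuous_id.div_const (2 : ℝ)).tendsto 0
    simpa [ContinuousWithinAt] using hlim.const_sub 1
  · unfold varianceKernel
    exact ContinuousAt.continuousWithinAt (by fun_prop (disch := exact hv.ne'))

lemma tendsto_varianceKernel_second_order :
    Tendsto (fun v => v ^ 2 * varianceKernel v - v) atTop (𝓝 (-(2 / 3))) := by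
  have hneg : Tendsto (fun v : ℝ => -(2 / v)) atTop (𝓝 0) := by
    simpa using (tendsto_const_nhds (x := (2 : ℝ))).div_atTop tendsto_id |>.neg
  have hcubic := ((Real.exp_sub_sum_range_succ_isLittleO_pow 3).comp_tendsto
    hneg).tendsto_div_nhds_zero
  have h := (hcubic.const_mul (-4)).sub_const (2 / 3)
  rw [mul_zero, zero_sub] at h
  refine h.congr' ?_
  filter_upwards [eventually_gt_atTop 0] with v hv
  simp only [Function.comp_apply, Finset.sum_range_succ, Finset.sum_range_zero, varianceKernel,
    Nat.factorial]
  field_simp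
  push_cast
  ring

lemma tendsto_mul_varianceKernel_atTop :
    Tendsto (fun v => v * varianceKernel v) atTop (𝓝 1) := by
  have h := (tendsto_inv_atTop_zero.mul tendsto_varianceKernel_second_order).add_const (1 : ℝ)
  rw [zero_mul, zero_add] at h
  refine h.congr' ?_
  filter_upwards [eventually_gt_atTop 0] with v hv
  field_simp
  ring

end VarianceKernel

section PolynomialApproximation

lemma exists_polynomial_near_of_continuousOn_Ioo {f : ℝ → ℝ} (hf : ContinuousOn f (Ioo 0 1))
    {a b : ℝ} (ha : Tendsto f (𝓝[>] 0) (𝓝 a)) (hb : Tendsto f (𝓝[<] 1) (𝓝 b))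
    {ε : ℝ} (hε : 0 < ε) :
    ∃ p : Polynomial ℝ, ∀ x ∈ Ioo (0 : ℝ) 1, |f x - p.eval x| ≤ ε := by
  obtain ⟨p, hp⟩ := exists_polynomial_near_of_continuousOn 0 1 _
    (continuousOn_Icc_extendFrom_Ioo hf ha hb) ε hε
  refine ⟨p, fun x hx => ?_⟩
  have h := hp x (Ioo_subset_Icc_self hx)
  rw [extendFrom_extends hf (x := x) hx, abs_sub_comm] at h
  exact h.le

lemma exists_polynomial_comp_near {R x V : ℝ → ℝ} (hR : ContinuousOn R (Ioi 0))
    (hV : ContinuousOn V (Ioo 0 1)) (hV_pos : MapsTo V (Ioo 0 1) (Ioi 0))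
    (hx : MapsTo x (Ioi 0) (Ioo 0 1)) (hVx : LeftInvOn V x (Ioi 0))
    {a b : ℝ} (ha : Tendsto (R ∘ V) (𝓝[>] 0) (𝓝 a)) (hb : Tendsto (R ∘ V) (𝓝[<] 1) (𝓝 b))
    {ε : ℝ} (hε : 0 < ε) :
    ∃ p : Polynomial ℝ, ∀ v > 0, |R v - p.eval (x v)| ≤ ε := by
  obtain ⟨p, hp⟩ := exists_polynomial_near_of_continuousOn_Ioo (hR.comp hV hV_pos) ha hb hε
  refine ⟨p, fun v hv => ?_⟩
  simpa only [Function.comp_apply, hVx hv] using hp (x v) (hx hv)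

end PolynomialApproximation

section Tauberian

variable {κ : Measure ℝ} {H : ℝ → ℝ} {ρ : ℝ}

lemma sub_div_arctanKernel_le {δ v : ℝ} (hδ : 0 < δ) (hv : 0 ≤ v) :
    |(1 + v ^ 2)⁻¹ - δ⁻¹ * ((1 + δ) * arctanKernel ((1 + δ) * v) - arctanKernel v)| ≤
      (2 * δ + δ ^ 2) * arctanKernel v := by
  rcases hv.eq_or_lt with rfl | hv
  · rw [mul_zero, arctanKernel_zero, mul_one, mul_one, add_sub_cancel_left,
      inv_mul_cancel₀ hδ.ne', zero_pow two_ne_zero, add_zero, inv_one, sub_self, abs_zero]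
    positivity
  obtain ⟨hlower, hupper⟩ := arctan_sub_arctan_mem_Icc hv.le
    (le_mul_of_one_le_left hv.le (le_add_of_nonneg_right hδ.le) : v ≤ (1 + δ) * v)
  have hincr : δ⁻¹ * ((1 + δ) * arctanKernel ((1 + δ) * v) - arctanKernel v) =
      (Real.arctan ((1 + δ) * v) - Real.arctan v) / (δ * v) := by
    rw [← mul_arctanKernel, ← mul_arctanKernel]
    field_simp
  have hdiff : (1 + v ^ 2)⁻¹ - (1 + ((1 + δ) * v) ^ 2)⁻¹ ≤ (2 * δ + δ ^ 2) * (1 + v ^ 2)⁻¹ := by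
    field_simp
    nlinarith [sq_nonneg v, mul_pos hδ (sq_pos_of_pos hv), sq_nonneg (δ * v)]
  rw [show (1 + δ) * v - v = δ * v by ring] at hlower hupper
  rw [hincr, abs_of_nonneg (sub_nonneg.2 ((div_le_iff₀ (by positivity)).2 hupper))]
  calc (1 + v ^ 2)⁻¹ - (Real.arctan ((1 + δ) * v) - Real.arctan v) / (δ * v)
      ≤ (1 + v ^ 2)⁻¹ - (1 + ((1 + δ) * v) ^ 2)⁻¹ :=
        sub_le_sub_left ((le_div_iff₀ (by positivity)).2 hlower) _
    _ ≤ (2 * δ + δ ^ 2) * (1 + v ^ 2)⁻¹ := hdiff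
    _ ≤ (2 * δ + δ ^ 2) * arctanKernel v := by gcongr; exact (arctanKernel_mem_Icc hv.le).1

/-- `(1 + v ^ 2)⁻¹` is the derivative at `z = 1` of `z * arctanKernel (z * v)`. -/
lemma HasScalingLimit.inv_one_add_sq_of_arctanKernel (hκ : ∀ᵐ v ∂κ, 0 ≤ v) (hρ : 0 ≤ ρ)
    (hH : RegularlyVaryingAtTop H ρ)
    (hA : HasScalingLimit κ (powerMeasure ρ) H arctanKernel) :
    HasScalingLimit κ (powerMeasure ρ) H fun v => (1 + v ^ 2)⁻¹ := by
  refine of_forall_approx hκ ae_powerMeasure_nonneg hH.pos (by fun_prop) hA fun ε hε => ?_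
  have hδ : 0 < min 1 (ε / 3) := by positivity
  refine ⟨_, (((hA.comp_mul hρ hH (add_pos one_pos hδ)).const_mul _).sub hA).const_mul _,
    fun v hv => (sub_div_arctanKernel_le hδ hv).trans ?_⟩
  have hA_nonneg : 0 ≤ arctanKernel v :=
    (by positivity : (0 : ℝ) ≤ (1 + v ^ 2)⁻¹).trans (arctanKernel_mem_Icc hv).1
  gcongr
  nlinarith [min_le_left 1 (ε / 3), min_le_right 1 (ε / 3)]

lemma inv_one_add_sq_sub_inv_add_sq {a : ℝ} (ha : 0 < a) (v : ℝ) :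
    (1 + v ^ 2)⁻¹ - (a + v ^ 2)⁻¹ = (a - 1) * ((a + v ^ 2)⁻¹ * (1 + v ^ 2)⁻¹) := by
  field_simp
  ring

lemma HasScalingLimit.inv_add_sq_mul_pow (hκ : ∀ᵐ v ∂κ, 0 ≤ v) (hρ : 0 ≤ ρ)
    (hH : RegularlyVaryingAtTop H ρ)
    (hD : HasScalingLimit κ (powerMeasure ρ) H fun v => (1 + v ^ 2)⁻¹) (n : ℕ) :
    ∀ a > 0, HasScalingLimit κ (powerMeasure ρ) H fun v => (a + v ^ 2)⁻¹ * (1 + v ^ 2)⁻¹ ^ n := by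
  induction n with
  | zero =>
    intro a ha
    convert (hD.comp_mul hρ hH (inv_pos.2 (Real.sqrt_pos.2 ha))).const_mul a⁻¹ using 2 with v
    rw [pow_zero, mul_one, mul_pow, inv_pow, Real.sq_sqrt ha.le]
    field_simp
  | succ n ih =>
    have of_ne {a : ℝ} (ha : 0 < a) (ha₁ : a ≠ 1) : HasScalingLimit κ (powerMeasure ρ) H
        fun v => (a + v ^ 2)⁻¹ * (1 + v ^ 2)⁻¹ ^ (n + 1) := by
      convert ((ih 1 one_pos).sub (ih a ha)).const_mul (a - 1)⁻¹ using 2 with v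
      rw [← sub_mul, inv_one_add_sq_sub_inv_add_sq ha, mul_assoc (a - 1),
        inv_mul_cancel_left₀ (sub_ne_zero.2 ha₁), pow_succ' (1 + v ^ 2)⁻¹, mul_assoc]
    intro a ha
    rcases ne_or_eq a 1 with ha₁ | rfl
    · exact of_ne ha ha₁
    refine of_forall_approx hκ ae_powerMeasure_nonneg hH.pos (by fun_prop) hD fun ε hε =>
      ⟨_, of_ne (a := 1 + ε) (by positivity) (by simpa using hε.ne'), fun v _ => ?_⟩
    have hle {b : ℝ} (hb : 0 ≤ b) : (1 + b + v ^ 2)⁻¹ ≤ 1 :=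
      inv_le_one_of_one_le₀ (by nlinarith [sq_nonneg v])
    have hpow : (1 + v ^ 2)⁻¹ ^ (n + 1) ≤ 1 :=
      pow_le_one₀ (by positivity) (by simpa using hle le_rfl)
    rw [← sub_mul, inv_one_add_sq_sub_inv_add_sq (by positivity), add_sub_cancel_left,
      mul_comm _ (1 + v ^ 2)⁻¹, ← mul_assoc, mul_assoc _ (1 + ε + v ^ 2)⁻¹,
      abs_of_nonneg (by positivity)]
    exact mul_le_of_le_one_right (by positivity)
      (mul_le_one₀ (hle hε.le) (by positivity) hpow)

lemma tendsto_arctanKernel_second_order :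
    Tendsto (fun v => v ^ 2 * arctanKernel v - Real.pi / 2 * v) atTop (𝓝 (-1)) := by
  have h := ((continuous_arctanKernel.tendsto 0).comp tendsto_inv_atTop_zero).neg
  rw [arctanKernel_zero] at h
  refine h.congr' ?_
  filter_upwards [eventually_gt_atTop 0] with v hv
  have hcompl : v⁻¹ * arctanKernel v⁻¹ = Real.pi / 2 - v * arctanKernel v := by
    rw [mul_arctanKernel, mul_arctanKernel, Real.arctan_inv_of_pos hv]
  rw [inv_mul_eq_iff_eq_mul₀ hv.ne'] at hcompl
  rw [Function.comp_apply, hcompl]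
  ring

/-- The factor `2 / π` cancels the leading terms `1 / v` and `π / (2 v)` of the two kernels. -/
lemma tendsto_one_add_sq_mul_varianceKernel_sub_arctanKernel :
    Tendsto (fun v => (1 + v ^ 2) * (varianceKernel v - 2 / Real.pi * arctanKernel v)) atTop
      (𝓝 (2 / Real.pi - 2 / 3)) := by
  have hsq : Tendsto (fun v => v ^ 2 * (varianceKernel v - 2 / Real.pi * arctanKernel v)) atTop
      (𝓝 (2 / Real.pi - 2 / 3)) := by
    convert tendsto_varianceKernel_second_order.sub
      (tendsto_arctanKernel_second_order.const_mul (2 / Real.pi)) using 1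
    · ext v
      field_simp
      ring
    · ring_nf
  have h := ((tendsto_inv_atTop_zero.pow 2).mul hsq).add hsq
  rw [zero_pow two_ne_zero, zero_mul, zero_add] at h
  refine h.congr' ?_
  filter_upwards [eventually_gt_atTop 0] with v hv
  field_simp

lemma exists_polynomial_near_one_add_sq_mul {r : ℝ → ℝ} (hr : ContinuousOn r (Ici 0)) {a : ℝ}
    (ha : Tendsto (fun v => (1 + v ^ 2) * r v) atTop (𝓝 a)) {ε : ℝ} (hε : 0 < ε) :
    ∃ p : Polynomial ℝ, ∀ v, 0 ≤ v →
      |r v - (1 + v ^ 2)⁻¹ * p.eval (1 + v ^ 2)⁻¹| ≤ ε * (1 + v ^ 2)⁻¹ := by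
  let V (x : ℝ) : ℝ := √(x⁻¹ - 1)
  have hR : ContinuousOn (fun v => (1 + v ^ 2) * r v) (Ici 0) := ContinuousOn.mul (by fun_prop) hr
  have hV_top : Tendsto V (𝓝[>] 0) atTop :=
    Real.tendsto_sqrt_atTop.comp (tendsto_atTop_add_const_right _ _ tendsto_inv_nhdsGT_zero)
  have hV_zero : Tendsto V (𝓝[<] 1) (𝓝[≥] 0) := by
    refine tendsto_nhdsWithin_iff.2 ⟨tendsto_nhdsWithin_of_tendsto_nhds ?_,
      .of_forall fun x => Real.sqrt_nonneg _⟩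
    have h : ContinuousAt V 1 := ContinuousAt.sqrt (by fun_prop (disch := norm_num))
    simpa [V, ContinuousAt] using h
  obtain ⟨p, hp⟩ := exists_polynomial_comp_near (x := fun v => (1 + v ^ 2)⁻¹) (V := V)
    (hR.mono Ioi_subset_Ici_self)
    (ContinuousOn.sqrt (by fun_prop (disch := exact fun x hx => hx.1.ne')))
    (fun x hx => Real.sqrt_pos.2 (sub_pos.2 ((one_lt_inv₀ hx.1).2 hx.2)))
    (fun v (hv : 0 < v) => ⟨by positivity, inv_lt_one_of_one_lt₀ (by nlinarith)⟩)
    (fun v (hv : 0 < v) => by simp [V, Real.sqrt_sq hv.le])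
    (ha.comp hV_top) ((hR 0 self_mem_Ici).tendsto.comp hV_zero) hε
  have hclosure (v) (hv : 0 ≤ v) : |(1 + v ^ 2) * r v - p.eval (1 + v ^ 2)⁻¹| ≤ ε := by
    rw [← mem_Ici, ← closure_Ioi] at hv
    refine le_on_closure (s := Ioi 0) hp ?_ continuousOn_const hv
    rw [closure_Ioi]
    exact (hR.sub (p.continuous.comp_continuousOn (by fun_prop (disch := intros; positivity)))).abs
  refine ⟨p, fun v hv => ?_⟩
  rw [← div_eq_mul_inv, le_div_iff₀ (by positivity), ← abs_of_pos (by positivity : 0 < 1 + v ^ 2),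
    ← abs_mul, abs_of_pos (by positivity : 0 < 1 + v ^ 2), sub_mul,
    mul_right_comm, inv_mul_cancel₀ (by positivity), one_mul, mul_comm (r v)]
  exact hclosure v hv

theorem HasScalingLimit.varianceKernel_of_arctanKernel (hκ : ∀ᵐ v ∂κ, 0 ≤ v) (hρ : 0 ≤ ρ)
    (hH : RegularlyVaryingAtTop H ρ)
    (hA : HasScalingLimit κ (powerMeasure ρ) H arctanKernel) :
    HasScalingLimit κ (powerMeasure ρ) H varianceKernel := by
  have hD := hA.inv_one_add_sq_of_arctanKernel hκ hρ hH
  refine of_forall_approx hκ ae_powerMeasure_nonneg hH.pos measurable_varianceKernel hD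
    fun ε hε => ?_
  obtain ⟨p, hp⟩ := exists_polynomial_near_one_add_sq_mul
    (continuousOn_varianceKernel.sub (continuous_arctanKernel.const_mul _).continuousOn)
    tendsto_one_add_sq_mul_varianceKernel_sub_arctanKernel hε
  refine ⟨_, (hA.const_mul (2 / Real.pi)).add <|
    polynomial_eval _ _ (fun n => hD.inv_add_sq_mul_pow hκ hρ hH n 1 one_pos) p, fun v hv => ?_⟩
  rw [← sub_sub]
  exact hp v hv

lemma natCast_mul_varianceKernel (n : ℕ) (v : ℝ) :
    n * varianceKernel ((n : ℝ)⁻¹ * v) = n - v / 2 * (1 - Real.exp (-(2 / v)) ^ n) := by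
  rcases n.eq_zero_or_pos with rfl | hn
  · simp
  have hexp : Real.exp (-(2 / v)) ^ n = Real.exp (-(2 / ((n : ℝ)⁻¹ * v))) := by
    rw [← Real.exp_nat_mul]
    congr 1
    rcases eq_or_ne v 0 with rfl | hv
    · simp
    · field_simp
  rw [varianceKernel, hexp]
  field_simp

/-- The second difference `2 Q(v/2) - 2 Q(v)` of `n ↦ n Q(v/n)` at `n = 0`, for
`Q = varianceKernel`. It is the gauge in which `arctanKernel` is approximated by dilates
of `varianceKernel`. -/
noncomputable def varianceGauge (v : ℝ) : ℝ := v / 2 * (1 - Real.exp (-(2 / v))) ^ 2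

lemma HasScalingLimit.varianceGauge_mul_exp_pow (hρ : 0 ≤ ρ) (hH : RegularlyVaryingAtTop H ρ)
    (hQ : HasScalingLimit κ (powerMeasure ρ) H varianceKernel) (n : ℕ) :
    HasScalingLimit κ (powerMeasure ρ) H
      fun v => varianceGauge v * Real.exp (-(2 / v)) ^ n := by
  have hdilate (k : ℕ) : HasScalingLimit κ (powerMeasure ρ) H
      fun v => k * varianceKernel ((k : ℝ)⁻¹ * v) := by
    rcases k.eq_zero_or_pos with rfl | hk
    · simpa using hQ.const_mul 0
    · exact (hQ.comp_mul hρ hH (inv_pos.2 (Nat.cast_pos.2 hk))).const_mul k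
  convert ((hdilate (n + 2)).sub ((hdilate (n + 1)).const_mul 2)).add (hdilate n) using 2 with v
  simp only [natCast_mul_varianceKernel, varianceGauge]
  push_cast
  ring

lemma varianceGauge_pos {v : ℝ} (hv : 0 < v) : 0 < varianceGauge v := by
  have hexp : Real.exp (-(2 / v)) < 1 := Real.exp_lt_one_iff.2 (by simpa using by positivity)
  have := sub_pos.2 hexp
  rw [varianceGauge]
  positivity

lemma tendsto_div_varianceGauge_nhdsGT_zero :
    Tendsto (fun v => (arctanKernel v - varianceKernel v) / varianceGauge v) (𝓝[>] 0) (𝓝 1) := by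
  have hexp : Tendsto (fun v : ℝ => Real.exp (-(2 / v))) (𝓝[>] 0) (𝓝 0) := by
    refine Real.tendsto_exp_neg_atTop_nhds_zero.comp ?_
    exact (tendsto_inv_nhdsGT_zero.const_mul_atTop (two_pos (α := ℝ))).congr
      fun v => (div_eq_mul_inv _ _).symm
  have harctan : Tendsto (fun v => (arctanKernel v - 1) / v) (𝓝[>] 0) (𝓝 0) := by
    refine squeeze_zero_norm' (a := id) ?_ (tendsto_nhdsWithin_of_tendsto_nhds tendsto_id)
    filter_upwards [eventually_mem_nhdsWithin] with v (hv : 0 < v)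
    obtain ⟨hlower, hupper⟩ := arctanKernel_mem_Icc hv.le
    have hinv : 1 - v ^ 2 ≤ (1 + v ^ 2)⁻¹ := by
      rw [← one_div, le_div_iff₀ (by positivity)]
      nlinarith [sq_nonneg (v ^ 2)]
    rw [norm_div, Real.norm_of_nonpos (by linarith), Real.norm_of_nonneg hv.le,
      div_le_iff₀ hv, id]
    linarith
  have h := ((harctan.const_mul 2).add (hexp.const_sub 1)).div ((hexp.const_sub 1).pow 2)
    (by norm_num)
  norm_num at h
  refine h.congr' ?_
  filter_upwards [eventually_mem_nhdsWithin] with v (hv : 0 < v)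
  have hgauge := (varianceGauge_pos hv).ne'
  rw [varianceGauge] at hgauge ⊢
  rw [varianceKernel]
  have := right_ne_zero_of_mul hgauge
  rw [Pi.div_apply]
  field_simp
  ring

lemma tendsto_div_varianceGauge_atTop :
    Tendsto (fun v => (arctanKernel v - varianceKernel v) / varianceGauge v) atTop
      (𝓝 ((Real.pi / 2 - 1) / 2)) := by
  have hQ : Tendsto varianceKernel atTop (𝓝 0) := by
    have h := tendsto_inv_atTop_zero.mul tendsto_mul_varianceKernel_atTop
    rw [zero_mul] at h
    refine h.congr' ?_
    filter_upwards [eventually_gt_atTop 0] with v hv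
    exact inv_mul_cancel_left₀ hv.ne' _
  have h := (tendsto_mul_arctanKernel_atTop.sub tendsto_mul_varianceKernel_atTop).div
    (((hQ.const_sub 1).pow 2).const_mul 2) (by norm_num)
  simp only [sub_zero, one_pow, mul_one] at h
  refine h.congr' ?_
  filter_upwards [eventually_gt_atTop 0] with v hv
  have hgauge : v * varianceGauge v = 2 * (1 - varianceKernel v) ^ 2 := by
    rw [varianceGauge, varianceKernel]
    ring
  rw [Pi.div_apply, ← hgauge, ← mul_sub, mul_div_mul_left _ _ hv.ne']

lemma tendsto_neg_two_div_log_nhdsGT_zero :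
    Tendsto (fun x => -(2 / Real.log x)) (𝓝[>] 0) (𝓝[>] 0) := by
  refine tendsto_nhdsWithin_iff.2 ⟨?_, ?_⟩
  · simpa using (Real.tendsto_log_nhdsGT_zero.const_div_atBot 2).neg
  · filter_upwards [Ioo_mem_nhdsGT one_pos] with x hx
    exact neg_pos.2 (div_neg_of_pos_of_neg two_pos (Real.log_neg hx.1 hx.2))

lemma tendsto_neg_two_div_log_nhdsLT_one :
    Tendsto (fun x => -(2 / Real.log x)) (𝓝[<] 1) atTop := by
  have hlog : Tendsto Real.log (𝓝[<] 1) (𝓝[<] 0) := by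
    refine tendsto_nhdsWithin_iff.2 ⟨tendsto_nhdsWithin_of_tendsto_nhds ?_, ?_⟩
    · simpa using (Real.continuousAt_log one_ne_zero).tendsto
    · filter_upwards [Ioo_mem_nhdsLT one_pos] with x hx using Real.log_neg hx.1 hx.2
  refine tendsto_neg_atBot_atTop.comp ?_
  exact ((tendsto_inv_nhdsLT_zero.comp hlog).const_mul_atBot (two_pos (α := ℝ))).congr
    fun x => (div_eq_mul_inv _ _).symm

lemma exists_polynomial_near_varianceGauge_mul {ε : ℝ} (hε : 0 < ε) :
    ∃ p : Polynomial ℝ, ∀ v, 0 ≤ v →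
      |arctanKernel v - (varianceKernel v + varianceGauge v * p.eval (Real.exp (-(2 / v))))| ≤
        ε * varianceGauge v := by
  let V (x : ℝ) : ℝ := -(2 / Real.log x)
  have hlog {x : ℝ} (hx : x ∈ Ioo (0 : ℝ) 1) : Real.log x < 0 := Real.log_neg hx.1 hx.2
  have hdiv : ContinuousOn (fun v : ℝ => 2 / v) (Ioi 0) :=
    continuousOn_const.div continuousOn_id fun v hv => ne_of_gt hv
  have hR : ContinuousOn (fun v => (arctanKernel v - varianceKernel v) / varianceGauge v)
      (Ioi 0) := by
    refine (continuous_arctanKernel.continuousOn.sub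
      (continuousOn_varianceKernel.mono Ioi_subset_Ici_self)).div ?_
      fun v hv => (varianceGauge_pos hv).ne'
    unfold varianceGauge
    fun_prop
  have hV_pos : MapsTo V (Ioo 0 1) (Ioi 0) :=
    fun x hx => neg_pos.2 (div_neg_of_pos_of_neg two_pos (hlog hx))
  obtain ⟨p, hp⟩ := exists_polynomial_comp_near (x := fun v => Real.exp (-(2 / v))) (V := V) hR
    (.neg (.div continuousOn_const (Real.continuousOn_log.mono fun x hx => hx.1.ne')
      fun x hx => (hlog hx).ne)) hV_pos
    (fun v (hv : 0 < v) => ⟨Real.exp_pos _, Real.exp_lt_one_iff.2 (by simpa using by positivity)⟩)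
    (fun v _ => by simp [V, div_neg, div_div_cancel₀])
    (tendsto_div_varianceGauge_nhdsGT_zero.comp tendsto_neg_two_div_log_nhdsGT_zero)
    (tendsto_div_varianceGauge_atTop.comp tendsto_neg_two_div_log_nhdsLT_one) hε
  refine ⟨p, fun v hv => ?_⟩
  rcases hv.eq_or_lt with rfl | hv
  · simp [varianceGauge]
  have h := hp v hv
  have hgauge := varianceGauge_pos hv
  rw [div_sub' hgauge.ne', abs_div, abs_of_pos hgauge, div_le_iff₀ hgauge, sub_sub] at h
  exact h

theorem HasScalingLimit.arctanKernel_of_varianceKernel (hκ : ∀ᵐ v ∂κ, 0 ≤ v) (hρ : 0 ≤ ρ)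
    (hH : RegularlyVaryingAtTop H ρ)
    (hQ : HasScalingLimit κ (powerMeasure ρ) H varianceKernel) :
    HasScalingLimit κ (powerMeasure ρ) H arctanKernel := by
  have hgauge := hQ.varianceGauge_mul_exp_pow hρ hH
  refine of_forall_approx hκ ae_powerMeasure_nonneg hH.pos continuous_arctanKernel.measurable
    (k := varianceGauge) (by simpa using hgauge 0) fun ε hε => ?_
  obtain ⟨p, hp⟩ := exists_polynomial_near_varianceGauge_mul hε
  exact ⟨_, hQ.add (polynomial_eval _ _ hgauge p), hp⟩

theorem tendsto_integral_varianceKernel_div_iff_arctanKernel (hκ : ∀ᵐ v ∂κ, 0 ≤ v)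
    (hκ_int : Integrable (fun v => (1 + v)⁻¹) κ) (hρ : 0 ≤ ρ) (hρ₁ : ρ < 1)
    (hH : RegularlyVaryingAtTop H ρ) {c : ℝ} (hc : 0 < c) :
    Tendsto (fun T => (∫ v, varianceKernel (v / T) ∂κ) / H T) atTop
        (𝓝 (c * ∫ v, varianceKernel v ∂powerMeasure ρ)) ↔
      Tendsto (fun T => (∫ v, arctanKernel (v / T) ∂κ) / H T) atTop
        (𝓝 (c * ∫ v, arctanKernel v ∂powerMeasure ρ)) := by
  rw [← tendsto_div_const_mul_iff hc.ne', ← tendsto_div_const_mul_iff hc.ne']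
  have hcH := hH.const_mul hc
  have hm_int := integrable_inv_one_add_powerMeasure hρ hρ₁
  refine ⟨fun hlim => (HasScalingLimit.arctanKernel_of_varianceKernel hκ hρ hcH ?_).tendsto,
    fun hlim => (HasScalingLimit.varianceKernel_of_arctanKernel hκ hρ hcH ?_).tendsto⟩
  · exact .of_abs_le_inv_one_add hκ ae_powerMeasure_nonneg hκ_int hm_int
      measurable_varianceKernel (fun _ => abs_varianceKernel_le) hlim
  · exact .of_abs_le_inv_one_add hκ ae_powerMeasure_nonneg hκ_int hm_int
      continuous_arctanKernel.measurable (fun _ => abs_arctanKernel_le) hlim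

end Tauberian

section Constants

variable {ρ : ℝ} {g w y : ℝ → ℝ}

instance : SFinite (powerMeasure ρ) := by
  unfold powerMeasure
  split_ifs <;> infer_instance

lemma integral_integral_comp_mul_powerMeasure {τ : Measure ℝ} [SFinite τ] (hρ : 0 ≤ ρ)
    (hy : ∀ᵐ s ∂τ, 0 < y s) (hw_meas : Measurable w) (hy_meas : Measurable y)
    (hg_meas : Measurable g) (hint : Integrable (fun s => w s * y s ^ (-ρ)) τ)
    (hg : Integrable g (powerMeasure ρ)) :
    ∫ v, ∫ s, w s * g (y s * v) ∂τ ∂powerMeasure ρ =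
      (∫ s, w s * y s ^ (-ρ) ∂τ) * ∫ v, g v ∂powerMeasure ρ := by
  have hinner (k : ℝ → ℝ) (s : ℝ) (hs : 0 < y s) (c : ℝ) :
      ∫ v, c * k (y s * v) ∂powerMeasure ρ = c * y s ^ (-ρ) * ∫ v, k v ∂powerMeasure ρ := by
    rw [integral_const_mul, integral_comp_mul_powerMeasure hρ hs, mul_assoc]
  have hprod : Integrable (Function.uncurry fun v s => w s * g (y s * v))
      ((powerMeasure ρ).prod τ) := by
    have hmeas : Measurable (Function.uncurry fun v s => w s * g (y s * v)) := by
      unfold Function.uncurry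
      fun_prop
    refine (integrable_prod_iff' hmeas.aestronglyMeasurable).2
      ⟨hy.mono fun s hs => (integrable_comp_mul_powerMeasure hρ hs hg).const_mul (w s), ?_⟩
    refine (hint.norm.mul_const (∫ v, ‖g v‖ ∂powerMeasure ρ)).congr (hy.mono fun s hs => ?_)
    simp only [Function.uncurry_apply_pair, norm_mul]
    rw [hinner (fun v => ‖g v‖) s hs, Real.norm_of_nonneg (Real.rpow_nonneg hs.le _)]
  rw [integral_integral_swap hprod, integral_congr_ae (hy.mono fun s hs => hinner g s hs _),
    integral_mul_const]

lemma integral_Ioi_exp_neg_mul_comp_mul_powerMeasure (hρ : 0 ≤ ρ) {p : ℝ} (hp : ρ * p < 1)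
    (hg_meas : Measurable g) (hg : Integrable g (powerMeasure ρ)) :
    ∫ v, (∫ t in Ioi 0, Real.exp (-t) * g (t ^ p * v)) ∂powerMeasure ρ =
      Real.Gamma (1 - ρ * p) * ∫ v, g v ∂powerMeasure ρ := by
  have hpow : EqOn (fun t : ℝ => Real.exp (-t) * t ^ (1 - ρ * p - 1))
      (fun t => Real.exp (-t) * (t ^ p) ^ (-ρ)) (Ioi 0) := fun t ht => by
    simp only
    rw [← Real.rpow_mul (mem_Ioi.1 ht).le]
    ring_nf
  rw [integral_integral_comp_mul_powerMeasure hρ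
    ((ae_restrict_mem measurableSet_Ioi).mono fun t ht => Real.rpow_pos_of_pos ht p)
    (by fun_prop) (by fun_prop) hg_meas
    ((integrableOn_congr_fun hpow measurableSet_Ioi).1
      (Real.GammaIntegral_convergent (sub_pos.2 hp))) hg,
    ← setIntegral_congr_fun measurableSet_Ioi hpow, ← Real.Gamma_eq_integral (sub_pos.2 hp)]

lemma integral_Ioi_exp_neg_mul_max_one_sub {v : ℝ} (hv : 0 ≤ v) :
    ∫ t in Ioi 0, Real.exp (-t) * max (1 - t * v / 2) 0 = varianceKernel v := by
  rcases hv.eq_or_lt with rfl | hv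
  · simpa using! integral_exp_neg_Ioi_zero
  have hderiv (t : ℝ) : HasDerivAt (fun t => Real.exp (-t) * (v / 2 * (t + 1) - 1))
      (Real.exp (-t) * (1 - t * v / 2)) t := by
    have h := (hasDerivAt_neg t).exp.mul
      ((((hasDerivAt_id t).add_const 1).const_mul (v / 2)).sub_const 1)
    exact h.congr_deriv (by simp only [id]; ring)
  have hzero (t) (ht : t ∈ Ioi 0 \ Ioc 0 (2 / v)) :
      Real.exp (-t) * max (1 - t * v / 2) 0 = 0 := by
    have hlt : 2 / v < t := lt_of_not_ge fun hle => ht.2 ⟨ht.1, hle⟩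
    rw [div_lt_iff₀ hv] at hlt
    rw [max_eq_right (by linarith), mul_zero]
  have hmax (t) (ht : t ∈ Ioc 0 (2 / v)) :
      Real.exp (-t) * max (1 - t * v / 2) 0 = Real.exp (-t) * (1 - t * v / 2) := by
    rw [max_eq_left (by linarith [(le_div_iff₀ hv).1 ht.2])]
  rw [setIntegral_eq_of_subset_of_forall_sdiff_eq_zero measurableSet_Ioi Ioc_subset_Ioi_self hzero,
    setIntegral_congr_fun measurableSet_Ioc hmax,
    ← intervalIntegral.integral_of_le (by positivity),
    intervalIntegral.integral_eq_sub_of_hasDerivAt (fun t _ => hderiv t)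
      (Continuous.intervalIntegrable (by fun_prop) _ _), varianceKernel, neg_zero, Real.exp_zero]
  field_simp
  ring

lemma integral_max_one_sub_powerMeasure (hρ : 0 ≤ ρ) :
    ∫ v, max (1 - v / 2) 0 ∂powerMeasure ρ = 2 ^ ρ / (1 + ρ) := by
  rcases hρ.eq_or_lt with rfl | hρ
  · simp
  have hzero (v : ℝ) (hv : v ∈ Ioi 0 \ Ioc 0 2) : ρ * v ^ (ρ - 1) * max (1 - v / 2) 0 = 0 := by
    have hlt : 2 < v := lt_of_not_ge fun hle => hv.2 ⟨hv.1, hle⟩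
    rw [max_eq_right (by linarith), mul_zero]
  have hmax (v : ℝ) (hv : v ∈ Ioc 0 2) :
      ρ * v ^ (ρ - 1) * max (1 - v / 2) 0 = ρ * v ^ (ρ - 1) - ρ / 2 * v ^ ρ := by
    rw [max_eq_left (by linarith [hv.2]), Real.rpow_sub_one hv.1.ne']
    field_simp [hv.1.ne']
  rw [integral_powerMeasure hρ,
    setIntegral_eq_of_subset_of_forall_sdiff_eq_zero measurableSet_Ioi Ioc_subset_Ioi_self hzero,
    setIntegral_congr_fun measurableSet_Ioc hmax, ← intervalIntegral.integral_of_le two_pos.le,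
    intervalIntegral.integral_sub
      ((intervalIntegral.intervalIntegrable_rpow' (by linarith)).const_mul _)
      ((intervalIntegral.intervalIntegrable_rpow' (by linarith)).const_mul _),
    intervalIntegral.integral_const_mul, intervalIntegral.integral_const_mul,
    integral_rpow (.inl (by linarith)), integral_rpow (.inl (by linarith)), sub_add_cancel,
    Real.zero_rpow hρ.ne', Real.zero_rpow (by positivity), Real.rpow_add_one two_ne_zero]
  field_simp
  ring

theorem integral_varianceKernel_powerMeasure (hρ : 0 ≤ ρ) (hρ₁ : ρ < 1) :
    ∫ v, varianceKernel v ∂powerMeasure ρ = 2 ^ ρ / (1 + ρ) * Real.Gamma (1 - ρ) := by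
  have hg : Integrable (fun v : ℝ => max (1 - v / 2) 0) (powerMeasure ρ) := by
    refine integrable_of_abs_le_inv_one_add (C := 2) ae_powerMeasure_nonneg
      (integrable_inv_one_add_powerMeasure hρ hρ₁) (by fun_prop) fun v hv => ?_
    rw [abs_of_nonneg (le_max_right _ _), ← div_eq_mul_inv, le_div_iff₀ (by positivity)]
    rcases max_cases (1 - v / 2) 0 with h | h <;> rw [h.1] <;> nlinarith [sq_nonneg (v - 1)]
  have h := integral_Ioi_exp_neg_mul_comp_mul_powerMeasure hρ (p := 1) (by rwa [mul_one])
    (by fun_prop) hg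
  simp only [Real.rpow_one, mul_one] at h
  rw [integral_max_one_sub_powerMeasure hρ, mul_comm] at h
  rw [← h]
  exact integral_congr_ae (ae_powerMeasure_nonneg.mono fun v hv =>
    (integral_Ioi_exp_neg_mul_max_one_sub hv).symm)

lemma integral_exp_neg_sq_powerMeasure (hρ : 0 ≤ ρ) :
    ∫ v, Real.exp (-v ^ 2) ∂powerMeasure ρ = Real.Gamma (1 + ρ / 2) := by
  rcases hρ.eq_or_lt with rfl | hρ
  · simp
  simp only [integral_powerMeasure hρ, mul_assoc, integral_const_mul]
  have h := integral_rpow_mul_exp_neg_rpow (p := 2) (q := ρ - 1) two_pos (by linarith)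
  simp only [Real.rpow_two, sub_add_cancel] at h
  rw [h, add_comm 1, Real.Gamma_add_one (by positivity)]
  ring

lemma integrable_inv_one_add_sq_powerMeasure (hρ : 0 ≤ ρ) (hρ₁ : ρ < 1) :
    Integrable (fun v => (1 + v ^ 2)⁻¹) (powerMeasure ρ) :=
  integrable_of_abs_le_inv_one_add ae_powerMeasure_nonneg
    (integrable_inv_one_add_powerMeasure hρ hρ₁) (by fun_prop) fun v hv => by
      rw [abs_of_nonneg (by positivity)]
      exact (arctanKernel_mem_Icc hv).1.trans ((le_abs_self _).trans (abs_arctanKernel_le hv))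

lemma integral_inv_one_add_sq_powerMeasure (hρ : 0 ≤ ρ) (hρ₁ : ρ < 1) :
    ∫ v, (1 + v ^ 2)⁻¹ ∂powerMeasure ρ = Real.Gamma (1 - ρ / 2) * Real.Gamma (1 + ρ / 2) := by
  have hg : Integrable (fun v => Real.exp (-v ^ 2)) (powerMeasure ρ) := by
    refine (integrable_inv_one_add_sq_powerMeasure hρ hρ₁).mono' (by fun_prop) (.of_forall
      fun v => ?_)
    rw [Real.norm_of_nonneg (Real.exp_nonneg _), Real.exp_neg]
    gcongr
    linarith [Real.add_one_le_exp (v ^ 2)]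
  have h := integral_Ioi_exp_neg_mul_comp_mul_powerMeasure hρ (p := 1 / 2) (by linarith)
    (by fun_prop) hg
  rw [integral_exp_neg_sq_powerMeasure hρ, mul_one_div] at h
  rw [← h]
  congr 1 with v
  have hlaplace := Real.integral_rpow_mul_exp_neg_mul_Ioi one_pos (by positivity : 0 < 1 + v ^ 2)
  simp only [sub_self, Real.rpow_zero, one_mul, one_div, Real.rpow_one, Real.Gamma_one,
    mul_one] at hlaplace
  rw [← hlaplace]
  refine setIntegral_congr_fun measurableSet_Ioi fun t (ht : 0 < t) => ?_
  rw [← Real.exp_add, mul_pow, ← Real.sqrt_eq_rpow, Real.sq_sqrt ht.le]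
  ring_nf

lemma integral_inv_one_add_sq_mul (v : ℝ) :
    ∫ s in Ioc (0 : ℝ) 1, (1 + (s * v) ^ 2)⁻¹ = arctanKernel v := by
  rcases eq_or_ne v 0 with rfl | hv
  · simp
  rw [← intervalIntegral.integral_of_le zero_le_one,
    intervalIntegral.integral_comp_mul_right (fun x => (1 + x ^ 2)⁻¹) hv, integral_inv_one_add_sq,
    zero_mul, one_mul, Real.arctan_zero, sub_zero, smul_eq_mul, inv_mul_eq_iff_eq_mul₀ hv,
    mul_arctanKernel]

theorem integral_arctanKernel_powerMeasure (hρ : 0 ≤ ρ) (hρ₁ : ρ < 1) :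
    ∫ v, arctanKernel v ∂powerMeasure ρ =
      Real.Gamma (1 - ρ / 2) * Real.Gamma (1 + ρ / 2) / (1 - ρ) := by
  have h := integral_integral_comp_mul_powerMeasure (τ := volume.restrict (Ioc 0 1))
    (w := fun _ => 1) (y := id) (g := fun v => (1 + v ^ 2)⁻¹) hρ
    ((ae_restrict_mem measurableSet_Ioc).mono fun s hs => hs.1) (by fun_prop) (by fun_prop)
    (by fun_prop)
    (by simpa using! (intervalIntegral.intervalIntegrable_rpow' (by linarith : -1 < -ρ)).1)
    (integrable_inv_one_add_sq_powerMeasure hρ hρ₁)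
  simp only [one_mul, id, integral_inv_one_add_sq_mul] at h
  rw [h, integral_inv_one_add_sq_powerMeasure hρ hρ₁,
    ← intervalIntegral.integral_of_le zero_le_one, integral_rpow (.inl (by linarith)),
    Real.one_rpow, Real.zero_rpow (by linarith)]
  ring

lemma Gamma_one_add_mul_Gamma_one_sub {x : ℝ} (hx : x ≠ 0) :
    Real.Gamma (1 + x) * Real.Gamma (1 - x) = Real.pi * x / Real.sin (Real.pi * x) := by
  rw [add_comm, Real.Gamma_add_one hx, mul_assoc, Real.Gamma_mul_Gamma_one_sub]
  ring

lemma Gamma_one_sub_mul_Gamma_one_add_half (hρ : 0 ≤ ρ) (hρ₁ : ρ < 1) :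
    Real.Gamma (1 - ρ / 2) * Real.Gamma (1 + ρ / 2) =
      Real.Gamma (1 + ρ) * Real.Gamma (1 - ρ) * Real.cos (Real.pi * (ρ / 2)) := by
  rcases hρ.eq_or_lt with rfl | hρ
  · simp
  have hsin : 0 < Real.sin (Real.pi * (ρ / 2)) :=
    Real.sin_pos_of_pos_of_lt_pi (by positivity) (by nlinarith [Real.pi_pos])
  have hcos : 0 < Real.cos (Real.pi * (ρ / 2)) :=
    Real.cos_pos_of_mem_Ioo ⟨by nlinarith [Real.pi_pos], by nlinarith [Real.pi_pos]⟩
  rw [mul_comm, Gamma_one_add_mul_Gamma_one_sub (by positivity),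
    Gamma_one_add_mul_Gamma_one_sub hρ.ne',
    show Real.pi * ρ = 2 * (Real.pi * (ρ / 2)) by ring, Real.sin_two_mul, div_mul_eq_mul_div,
    div_eq_div_iff hsin.ne' (by positivity)]
  ring

theorem integral_arctanKernel_eq_Cconst_mul (hρ : 0 ≤ ρ) (hρ₁ : ρ < 1) :
    2 ^ ρ * ∫ v, arctanKernel v ∂powerMeasure ρ =
      Real.pi * Cconst (1 + ρ) * ∫ v, varianceKernel v ∂powerMeasure ρ := by
  have hGamma : Real.Gamma (1 + (1 + ρ)) = (1 + ρ) * Real.Gamma (1 + ρ) := by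
    rw [add_comm, Real.Gamma_add_one (by positivity)]
  have hsin : Real.sin ((1 + ρ) * Real.pi / 2) = Real.cos (Real.pi * (ρ / 2)) := by
    rw [← Real.sin_add_pi_div_two]
    ring_nf
  rw [integral_arctanKernel_powerMeasure hρ hρ₁, integral_varianceKernel_powerMeasure hρ hρ₁,
    Gamma_one_sub_mul_Gamma_one_add_half hρ hρ₁, Cconst, hGamma, hsin,
    show 2 - (1 + ρ) = 1 - ρ by ring]
  have := sub_pos.2 hρ₁
  field_simp

end Constants

/-- The Cayley transform `(1+λ)/(1-λ)`, which maps `[-1,1)` onto `[0,∞)`. -/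
noncomputable def cayley (l : ℝ) : ℝ := (1 + l) / (1 - l)

/-- The image under `cayley` of the measure with density `cayley` with respect to `ν`. Both the
variances and the spectral distribution function of `ν` are scaling integrals against it. -/
noncomputable def cayleyMeasure (ν : Measure ℝ) : Measure ℝ :=
  (ν.withDensity fun l => ENNReal.ofReal (cayley l)).map cayley

lemma measurable_cayley : Measurable cayley := by
  unfold cayley
  fun_prop

lemma cayley_nonneg {l : ℝ} (hl : l ∈ Ico (-1) 1) : 0 ≤ cayley l :=
  div_nonneg (by linarith [hl.1]) (by linarith [hl.2])

section CayleyMeasure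

variable {ν : Measure ℝ} {g : ℝ → ℝ}

lemma ae_cayleyMeasure_nonneg (hν : ∀ᵐ l ∂ν, l ∈ Ico (-1) 1) :
    ∀ᵐ v ∂cayleyMeasure ν, 0 ≤ v := by
  rw [cayleyMeasure, ae_map_iff measurable_cayley.aemeasurable measurableSet_Ici]
  exact (withDensity_absolutelyContinuous _ _).ae_le (hν.mono fun l => cayley_nonneg)

lemma integral_cayleyMeasure (hν : ∀ᵐ l ∂ν, l ∈ Ico (-1) 1) (hg : Measurable g) :
    ∫ v, g v ∂cayleyMeasure ν = ∫ l, cayley l * g (cayley l) ∂ν := by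
  rw [cayleyMeasure, integral_map measurable_cayley.aemeasurable hg.aestronglyMeasurable,
    integral_withDensity_eq_integral_toReal_smul measurable_cayley.ennreal_ofReal
      (.of_forall fun _ => ENNReal.ofReal_lt_top)]
  refine integral_congr_ae (hν.mono fun l hl => ?_)
  simp only [smul_eq_mul, ENNReal.toReal_ofReal (cayley_nonneg hl)]

lemma integrable_cayleyMeasure_iff (hν : ∀ᵐ l ∂ν, l ∈ Ico (-1) 1) (hg : Measurable g) :
    Integrable g (cayleyMeasure ν) ↔ Integrable (fun l => cayley l * g (cayley l)) ν := by
  rw [cayleyMeasure, integrable_map_measure hg.aestronglyMeasurable measurable_cayley.aemeasurable,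
    integrable_withDensity_iff_integrable_smul₀' measurable_cayley.ennreal_ofReal.aemeasurable
      (.of_forall fun _ => ENNReal.ofReal_lt_top)]
  refine integrable_congr (hν.mono fun l hl => ?_)
  simp only [smul_eq_mul, Function.comp_apply, ENNReal.toReal_ofReal (cayley_nonneg hl)]

lemma integrable_inv_one_add_cayleyMeasure [IsFiniteMeasure ν] (hν : ∀ᵐ l ∂ν, l ∈ Ico (-1) 1) :
    Integrable (fun v => (1 + v)⁻¹) (cayleyMeasure ν) := by
  rw [integrable_cayleyMeasure_iff hν (by fun_prop)]
  have := measurable_cayley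
  refine .of_bound (by fun_prop) 1 (hν.mono fun l hl => ?_)
  have hc := cayley_nonneg hl
  rw [Real.norm_of_nonneg (by positivity), ← div_eq_mul_inv, div_le_one (by positivity)]
  linarith

end CayleyMeasure

section Variance

lemma natCast_add_two_mul_sum_Ico {l : ℝ} (hl : l ≠ 1) (n : ℕ) :
    (n : ℝ) + 2 * ∑ k ∈ Finset.Ico 1 n, ((n : ℝ) - (k : ℝ)) * l ^ k =
      n * cayley l - 2 * l / (1 - l) ^ 2 * (1 - l ^ n) := by
  have hl' : 1 - l ≠ 0 := sub_ne_zero.2 hl.symm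
  induction n with
  | zero => simp
  | succ n ih =>
    have hsucc : ∑ k ∈ Finset.Ico 1 (n + 1), (((n + 1 : ℕ) : ℝ) - k) * l ^ k =
        ∑ k ∈ Finset.Ico 1 n, ((n : ℝ) - k) * l ^ k + ∑ k ∈ Finset.Ico 1 (n + 1), l ^ k := by
      have hlast : ∑ k ∈ Finset.Ico 1 (n + 1), ((n : ℝ) - k) * l ^ k =
          ∑ k ∈ Finset.Ico 1 n, ((n : ℝ) - k) * l ^ k := by
        rcases n.eq_zero_or_pos with rfl | hn
        · simp
        · rw [Finset.sum_Ico_succ_top hn, sub_self, zero_mul, add_zero]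
      rw [← hlast, ← Finset.sum_add_distrib]
      refine Finset.sum_congr rfl fun k _ => ?_
      push_cast
      ring
    have hgeom : ∑ k ∈ Finset.Ico 1 (n + 1), l ^ k = (l - l ^ (n + 1)) / (1 - l) := by
      rw [geom_sum_Ico' hl n.succ_pos, pow_one]
    rw [hsucc, hgeom, mul_add, ← add_assoc, Nat.cast_succ, add_right_comm (n : ℝ), ih, cayley]
    field_simp
    ring

lemma pow_sub_pow_mul_one_sub_le {a b : ℝ} (hb : 0 ≤ b) (hba : b ≤ a) (ha : a ≤ 1) (n : ℕ) :
    (a ^ n - b ^ n) * (1 - a) ≤ a - b := by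
  induction n with
  | zero => simpa using hba
  | succ n ih =>
    have hpow : b ^ n ≤ 1 := pow_le_one₀ hb (hba.trans ha)
    calc (a ^ (n + 1) - b ^ (n + 1)) * (1 - a)
        = a * ((a ^ n - b ^ n) * (1 - a)) + (a - b) * (1 - a) * b ^ n := by ring
      _ ≤ a * (a - b) + (a - b) * (1 - a) * 1 := by
        have := sub_nonneg.2 ha
        have := sub_nonneg.2 hba
        have := hb.trans hba
        gcongr
      _ = a - b := by ring

lemma one_sub_div_one_add_le_exp {u : ℝ} (hu : 0 ≤ u) (hu₁ : u < 1) :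
    (1 - u) / (1 + u) ≤ Real.exp (-(2 * u)) := by
  have hu' : 0 < 1 - u := sub_pos.2 hu₁
  have h := Real.le_log_one_add_of_nonneg (x := 2 * u / (1 - u)) (by positivity)
  rw [show 2 * (2 * u / (1 - u)) / (2 * u / (1 - u) + 2) = 2 * u by field_simp; ring,
    show 1 + 2 * u / (1 - u) = (1 + u) / (1 - u) by field_simp; ring,
    Real.le_log_iff_exp_le (by positivity)] at h
  rw [Real.exp_neg, ← inv_div]
  gcongr

lemma exp_pow_sub_pow_mem_Icc {l : ℝ} (hl : l ∈ Ioo (0 : ℝ) 1) (n : ℕ) :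
    Real.exp (-(2 / cayley l)) ^ n - l ^ n ∈ Icc 0 ((1 - l) ^ 2 / (4 * l)) := by
  obtain ⟨hl₀, hl₁⟩ := hl
  have : 0 < 1 - l := sub_pos.2 hl₁
  set u := (1 - l) / (1 + l) with hu
  have hu₀ : 0 < u := by positivity
  have hu₁ : 0 < 1 - u := by rw [hu]; field_simp; linarith
  have hl_eq : l = (1 - u) / (1 + u) := by rw [hu]; field_simp; ring
  have hexp_eq : 2 / cayley l = 2 * u := by rw [cayley, hu]; field_simp
  rw [hexp_eq]
  set x := Real.exp (-(2 * u))
  have hlx : l ≤ x := hl_eq.trans_le (one_sub_div_one_add_le_exp hu₀.le (by linarith))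
  have hx : x ≤ 1 - 2 * u + (2 * u) ^ 2 / 2 := exp_neg_le_quadratic (by positivity)
  have hdiff : x - l ≤ 2 * u ^ 3 / (1 + u) := by
    rw [show 2 * u ^ 3 / (1 + u) = 1 - 2 * u + (2 * u) ^ 2 / 2 - (1 - u) / (1 + u) by
      field_simp; ring, ← hl_eq]
    linarith
  have hpow : 0 ≤ x ^ n - l ^ n := sub_nonneg.2 (pow_le_pow_left₀ hl₀.le hlx n)
  refine ⟨hpow, ?_⟩
  have hmul : (x ^ n - l ^ n) * (2 * u * (1 - u)) ≤ 2 * u ^ 3 / (1 + u) := calc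
    (x ^ n - l ^ n) * (2 * u * (1 - u)) ≤ (x ^ n - l ^ n) * (1 - x) := by gcongr; linarith
    _ ≤ x - l := pow_sub_pow_mul_one_sub_le hl₀.le hlx (by nlinarith) n
    _ ≤ 2 * u ^ 3 / (1 + u) := hdiff
  rw [← le_div_iff₀ (by positivity)] at hmul
  have hu_eq : 1 - u = 2 * l / (1 + l) := by rw [hu]; field_simp; ring
  refine hmul.trans_eq ?_
  rw [hu_eq, hu]
  field_simp
  ring

lemma abs_sum_sub_varianceKernel_le {l : ℝ} (hl : l ∈ Ico (-1) 1) (n : ℕ) :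
    |((n : ℝ) + 2 * ∑ k ∈ Finset.Ico 1 n, ((n : ℝ) - (k : ℝ)) * l ^ k) -
      n * (cayley l * varianceKernel (cayley l / n))| ≤ 3 / 2 := by
  have hl₁ : 0 < 1 - l := sub_pos.2 hl.2
  set x := Real.exp (-(2 / cayley l)) with hx
  have hx_pow : x ^ n ∈ Icc 0 1 := ⟨by positivity, pow_le_one₀ (Real.exp_nonneg _)
    (Real.exp_le_one_iff.2 (neg_nonpos.2 (div_nonneg two_pos.le (cayley_nonneg hl))))⟩
  have hsq : cayley l ^ 2 = 4 * l / (1 - l) ^ 2 + 1 := by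
    rw [cayley]
    field_simp
    ring
  have hdiff : ((n : ℝ) + 2 * ∑ k ∈ Finset.Ico 1 n, ((n : ℝ) - (k : ℝ)) * l ^ k) -
      n * (cayley l * varianceKernel (cayley l / n)) =
        (1 - x ^ n) / 2 - 2 * l / (1 - l) ^ 2 * (x ^ n - l ^ n) := by
    rw [natCast_add_two_mul_sum_Ico hl.2.ne, mul_left_comm, div_eq_inv_mul (cayley l),
      natCast_mul_varianceKernel, ← hx]
    linear_combination (1 - x ^ n) / 2 * hsq
  have hmain : 2 * l / (1 - l) ^ 2 * (x ^ n - l ^ n) ∈ Icc (-1) 1 := by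
    rcases lt_or_ge 0 l with hl₀ | hl₀
    · have hmem := exp_pow_sub_pow_mem_Icc ⟨hl₀, hl.2⟩ n
      have hupper : 2 * l / (1 - l) ^ 2 * ((1 - l) ^ 2 / (4 * l)) = 1 / 2 := by field_simp; norm_num
      have hle := mul_le_mul_of_nonneg_left hmem.2 (by positivity : 0 ≤ 2 * l / (1 - l) ^ 2)
      have hge := mul_nonneg (by positivity : 0 ≤ 2 * l / (1 - l) ^ 2) hmem.1
      exact ⟨by linarith, by linarith⟩
    · have hcoef : |2 * l / (1 - l) ^ 2| ≤ 1 / 2 := by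
        rw [abs_div, abs_of_nonpos (by linarith), abs_of_nonneg (by positivity),
          div_le_iff₀ (by positivity)]
        nlinarith [sq_nonneg (1 + l)]
      have hl_pow : |l ^ n| ≤ 1 := by
        rw [abs_pow]
        exact pow_le_one₀ (abs_nonneg l) (abs_le.2 ⟨hl.1, hl.2.le⟩)
      have hsub : |x ^ n - l ^ n| ≤ 2 := (abs_sub _ _).trans <| by
        rw [abs_of_nonneg hx_pow.1]; linarith [hx_pow.2]
      rw [mem_Icc, ← abs_le, abs_mul]
      exact (mul_le_mul hcoef hsub (abs_nonneg _) (by norm_num)).trans_eq (by norm_num)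
  rw [hdiff, abs_le]
  constructor <;> linarith [hmain.1, hmain.2, hx_pow.1, hx_pow.2]

end Variance

section VarSeqR

variable {ν : Measure ℝ} [IsFiniteMeasure ν]

lemma integrable_varianceKernel_div_cayleyMeasure (hν : ∀ᵐ l ∂ν, l ∈ Ico (-1) 1) {T : ℝ}
    (hT : 0 < T) : Integrable (fun v => varianceKernel (v / T)) (cayleyMeasure ν) :=
  integrable_comp_div_of_abs_le_inv_one_add (ae_cayleyMeasure_nonneg hν)
    (integrable_inv_one_add_cayleyMeasure hν) measurable_varianceKernel
    (fun _ => abs_varianceKernel_le) hT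

lemma abs_VarSeqR_sub_le (hν : ∀ᵐ l ∂ν, l ∈ Ico (-1) 1) {n : ℕ} (hn : 0 < n) :
    |VarSeqR ν n - n * ∫ v, varianceKernel (v / n) ∂cayleyMeasure ν| ≤ ν.real univ * (3 / 2) := by
  have hQ_meas : Measurable fun v => varianceKernel (v / n) :=
    measurable_varianceKernel.comp (measurable_id.div_const _)
  have hQ_int : Integrable (fun l => (n : ℝ) * (cayley l * varianceKernel (cayley l / n))) ν :=
    ((integrable_cayleyMeasure_iff hν hQ_meas).1
      (integrable_varianceKernel_div_cayleyMeasure hν (Nat.cast_pos.2 hn))).const_mul _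
  have hbound := hν.mono fun l hl => abs_sum_sub_varianceKernel_le hl n
  have hsum_int := integrable_of_abs_sub_le (by fun_prop) hQ_int (integrable_const (3 / 2)) hbound
  rw [integral_cayleyMeasure hν hQ_meas, ← integral_const_mul, VarSeqR]
  simpa only [integral_const, smul_eq_mul]
    using abs_integral_sub_le hsum_int hQ_int (integrable_const (3 / 2)) hbound

lemma exp_neg_sub_exp_neg_le {a b : ℝ} (ha : 0 ≤ a) (hab : a ≤ b) :
    Real.exp (-a) - Real.exp (-b) ≤ b - a := by
  have hfactor : Real.exp (-b) = Real.exp (-a) * Real.exp (-(b - a)) := by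
    rw [← Real.exp_add]
    ring_nf
  have ha' : Real.exp (-a) ≤ 1 := Real.exp_le_one_iff.2 (neg_nonpos.2 ha)
  have hle : Real.exp (-(b - a)) ≤ 1 := Real.exp_le_one_iff.2 (neg_nonpos.2 (sub_nonneg.2 hab))
  nlinarith [Real.one_sub_le_exp_neg (b - a)]

lemma monotoneOn_mul_varianceKernel_div {v : ℝ} (hv : 0 ≤ v) :
    MonotoneOn (fun T => T * varianceKernel (v / T)) (Ioi 0) := by
  rcases hv.eq_or_lt with rfl | hv
  · exact fun S _ T _ hST => by simpa using hST
  have heq {T : ℝ} (hT : 0 < T) :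
      T * varianceKernel (v / T) = T - v / 2 * (1 - Real.exp (-(2 * T / v))) := by
    rw [varianceKernel, div_div_eq_mul_div]
    field_simp
  intro S (hS : 0 < S) T (hT : 0 < T) hST
  have h := exp_neg_sub_exp_neg_le (a := 2 * S / v) (b := 2 * T / v) (by positivity) (by gcongr)
  have hmul := mul_le_mul_of_nonneg_left h (half_pos hv).le
  rw [show v / 2 * (2 * T / v - 2 * S / v) = T - S by field_simp] at hmul
  simp only [heq hS, heq hT]
  linarith

lemma monotoneOn_mul_integral_varianceKernel_div (hν : ∀ᵐ l ∂ν, l ∈ Ico (-1) 1) :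
    MonotoneOn (fun T => T * ∫ v, varianceKernel (v / T) ∂cayleyMeasure ν) (Ioi 0) := by
  intro S hS T hT hST
  simp only [← integral_const_mul]
  exact integral_mono_ae ((integrable_varianceKernel_div_cayleyMeasure hν hS).const_mul S)
    ((integrable_varianceKernel_div_cayleyMeasure hν hT).const_mul T)
    ((ae_cayleyMeasure_nonneg hν).mono fun v hv => monotoneOn_mul_varianceKernel_div hv hS hT hST)

theorem tendsto_VarSeqR_div_iff (hν : ∀ᵐ l ∂ν, l ∈ Ico (-1) 1) {H : ℝ → ℝ} {ρ : ℝ}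
    (hρ : -1 < ρ) (hH : RegularlyVaryingAtTop H ρ) {c : ℝ} :
    Tendsto (fun n : ℕ => VarSeqR ν n / (n * H n)) atTop (𝓝 c) ↔
      Tendsto (fun T => (∫ v, varianceKernel (v / T) ∂cayleyMeasure ν) / H T) atTop (𝓝 c) := by
  have hH_top : Tendsto (fun n : ℕ => n * H n) atTop atTop :=
    (hH.id_mul.tendsto_atTop (by linarith)).comp tendsto_natCast_atTop_atTop
  have hdist : Tendsto (fun n : ℕ => dist (VarSeqR ν n / (n * H n))
      ((n * ∫ v, varianceKernel (v / n) ∂cayleyMeasure ν) / (n * H n))) atTop (𝓝 0) := by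
    refine squeeze_zero' (.of_forall fun _ => dist_nonneg) ?_
      ((tendsto_const_nhds (x := ν.real univ * (3 / 2))).div_atTop hH_top)
    filter_upwards [eventually_gt_atTop 0] with n hn
    have hHn := hH.id_mul.pos n (Nat.cast_pos.2 hn)
    rw [Real.dist_eq, ← sub_div, abs_div, abs_of_pos hHn]
    gcongr
    exact abs_VarSeqR_sub_le hν hn
  have hcancel : (fun T => (T * ∫ v, varianceKernel (v / T) ∂cayleyMeasure ν) / (T * H T))
      =ᶠ[atTop] fun T => (∫ v, varianceKernel (v / T) ∂cayleyMeasure ν) / H T :=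
    (eventually_gt_atTop 0).mono fun T hT => mul_div_mul_left _ _ hT.ne'
  rw [tendsto_iff_of_dist hdist, ← tendsto_congr' hcancel]
  exact ⟨hH.id_mul.tendsto_div_atTop_of_monotoneOn (monotoneOn_mul_integral_varianceKernel_div hν),
    fun hlim => hlim.comp tendsto_natCast_atTop_atTop⟩

end VarSeqR

section SpectralDistribution

/-- The Poisson kernel of the unit disc at the real point `l` and the boundary point `exp (i t)`. -/
noncomputable def angularPoissonKernel (l t : ℝ) : ℝ :=
  (1 - l ^ 2) / (1 + l ^ 2 - 2 * l * Real.cos t)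

/-- The spectral distribution function of `ν`, the `F` of the paper when `ν` lives on `[-1,1]`. -/
noncomputable def spectralDistribution (ν : Measure ℝ) (x : ℝ) : ℝ :=
  1 / (2 * Real.pi) * ∫ t in (0 : ℝ)..x, (∫ l, angularPoissonKernel l t ∂ν)

lemma one_add_sq_sub_two_mul_mul_cos (l t : ℝ) :
    1 + l ^ 2 - 2 * l * Real.cos t =
      (1 - l) ^ 2 * Real.cos (t / 2) ^ 2 + (1 + l) ^ 2 * Real.sin (t / 2) ^ 2 := by
  have hcos : Real.cos t = Real.cos (t / 2) ^ 2 - Real.sin (t / 2) ^ 2 := by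
    rw [← Real.cos_two_mul', mul_div_cancel₀ _ two_ne_zero]
  rw [hcos]
  linear_combination -(1 + l ^ 2) * Real.cos_sq_add_sin_sq (t / 2)

lemma cos_half_pos {t : ℝ} (ht : t ∈ Ico 0 Real.pi) : 0 < Real.cos (t / 2) :=
  Real.cos_pos_of_mem_Ioo ⟨by linarith [ht.1, Real.pi_pos], by linarith [ht.2]⟩

lemma tan_half_pos {x : ℝ} (hx : x ∈ Ioo 0 Real.pi) : 0 < Real.tan (x / 2) :=
  Real.tan_pos_of_pos_of_lt_pi_div_two (half_pos hx.1) (by linarith [hx.2])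

variable {l : ℝ}

lemma angularPoissonKernel_den_pos (hl : l ∈ Ico (-1) 1) {t : ℝ} (ht : t ∈ Ico 0 Real.pi) :
    0 < 1 + l ^ 2 - 2 * l * Real.cos t := by
  rw [one_add_sq_sub_two_mul_mul_cos]
  have := cos_half_pos ht
  have := sub_pos.2 hl.2
  positivity

lemma angularPoissonKernel_nonneg (hl : l ∈ Ico (-1) 1) {t : ℝ} (ht : t ∈ Ico 0 Real.pi) :
    0 ≤ angularPoissonKernel l t :=
  div_nonneg (by nlinarith [hl.1, hl.2]) (angularPoissonKernel_den_pos hl ht).le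

lemma continuousOn_angularPoissonKernel (hl : l ∈ Ico (-1) 1) :
    ContinuousOn (angularPoissonKernel l) (Ico 0 Real.pi) := by
  unfold angularPoissonKernel
  exact .div (by fun_prop) (by fun_prop) fun t ht => (angularPoissonKernel_den_pos hl ht).ne'

lemma hasDerivAt_two_mul_arctan_cayley_mul_tan_half (hl : l ∈ Ico (-1) 1) {t : ℝ}
    (ht : t ∈ Ico 0 Real.pi) :
    HasDerivAt (fun t => 2 * Real.arctan (cayley l * Real.tan (t / 2)))
      (angularPoissonKernel l t) t := by
  have hcos := cos_half_pos ht
  have hl₁ := sub_pos.2 hl.2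
  have hden := angularPoissonKernel_den_pos hl ht
  have htan := (Real.hasDerivAt_tan hcos.ne').comp t ((hasDerivAt_id t).div_const 2)
  refine ((htan.const_mul (cayley l)).arctan.const_mul 2).congr_deriv ?_
  rw [angularPoissonKernel]
  rw [one_add_sq_sub_two_mul_mul_cos] at hden ⊢
  simp only [Function.comp_apply, id_eq, cayley, Real.tan_eq_sin_div_cos]
  field_simp
  ring

lemma integral_angularPoissonKernel (hl : l ∈ Ico (-1) 1) {x : ℝ} (hx : x ∈ Ico 0 Real.pi) :
    ∫ t in (0 : ℝ)..x, angularPoissonKernel l t =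
      2 * Real.arctan (cayley l * Real.tan (x / 2)) := by
  have hsub : uIcc 0 x ⊆ Ico 0 Real.pi := by
    rw [uIcc_of_le hx.1]
    exact Icc_subset_Ico_right hx.2
  rw [intervalIntegral.integral_eq_sub_of_hasDerivAt
    (fun t ht => hasDerivAt_two_mul_arctan_cayley_mul_tan_half hl (hsub ht))
    ((continuousOn_angularPoissonKernel hl).mono hsub).intervalIntegrable]
  simp

variable {ν : Measure ℝ} [IsFiniteMeasure ν]

lemma integrable_uncurry_angularPoissonKernel (hν : ∀ᵐ l ∂ν, l ∈ Ico (-1) 1) {x : ℝ}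
    (hx : x ∈ Ico 0 Real.pi) :
    Integrable (Function.uncurry fun t l => angularPoissonKernel l t)
      ((volume.restrict (Ioc 0 x)).prod ν) := by
  have hsub : Icc 0 x ⊆ Ico 0 Real.pi := Icc_subset_Ico_right hx.2
  have hmeas := measurable_cayley
  rw [integrable_prod_iff' (by
    simp only [Function.uncurry_def, angularPoissonKernel]
    exact Measurable.aestronglyMeasurable (by fun_prop))]
  refine ⟨hν.mono fun l hl => ?_, ?_⟩
  · exact ((continuousOn_angularPoissonKernel hl).mono hsub).integrableOn_Icc.mono_set
      Ioc_subset_Icc_self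
  · have hint : Integrable (fun l => 2 * Real.arctan (cayley l * Real.tan (x / 2))) ν :=
      .const_mul (.of_bound (by fun_prop) (Real.pi / 2) (.of_forall fun l =>
        abs_le.2 ⟨(Real.neg_pi_div_two_lt_arctan _).le, (Real.arctan_lt_pi_div_two _).le⟩)) 2
    refine hint.congr (hν.mono fun l hl => ?_)
    dsimp only
    rw [← integral_angularPoissonKernel hl hx, intervalIntegral.integral_of_le hx.1]
    refine setIntegral_congr_fun measurableSet_Ioc fun t ht => ?_
    exact (Real.norm_of_nonneg
      (angularPoissonKernel_nonneg hl (hsub (Ioc_subset_Icc_self ht)))).symm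

lemma integral_integral_angularPoissonKernel (hν : ∀ᵐ l ∂ν, l ∈ Ico (-1) 1) {x : ℝ}
    (hx : x ∈ Ico 0 Real.pi) :
    ∫ t in (0 : ℝ)..x, (∫ l, angularPoissonKernel l t ∂ν) =
      2 * ∫ l, Real.arctan (cayley l * Real.tan (x / 2)) ∂ν := by
  rw [intervalIntegral.integral_of_le hx.1,
    integral_integral_swap (integrable_uncurry_angularPoissonKernel hν hx), ← integral_const_mul]
  refine integral_congr_ae (hν.mono fun l hl => ?_)
  dsimp only
  rw [← intervalIntegral.integral_of_le hx.1, integral_angularPoissonKernel hl hx]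

lemma spectralDistribution_eq (hν : ∀ᵐ l ∂ν, l ∈ Ico (-1) 1) {x : ℝ} (hx : x ∈ Ioo 0 Real.pi) :
    spectralDistribution ν x = Real.tan (x / 2) / Real.pi *
      ∫ v, arctanKernel (v / (Real.tan (x / 2))⁻¹) ∂cayleyMeasure ν := by
  have htan := tan_half_pos hx
  have hmeas : Measurable fun v => arctanKernel (v / (Real.tan (x / 2))⁻¹) :=
    continuous_arctanKernel.measurable.comp (measurable_id.div_const _)
  have hkernel (c : ℝ) : c * arctanKernel (c / (Real.tan (x / 2))⁻¹) =
      (Real.tan (x / 2))⁻¹ * Real.arctan (c * Real.tan (x / 2)) := by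
    rw [div_inv_eq_mul, ← mul_arctanKernel]
    field_simp
  rw [spectralDistribution, integral_integral_angularPoissonKernel hν (Ioo_subset_Ico_self hx),
    integral_cayleyMeasure hν hmeas]
  simp only [hkernel, integral_const_mul]
  generalize ∫ l, Real.arctan (cayley l * Real.tan (x / 2)) ∂ν = I
  field_simp

lemma tendsto_inv_tan_half_div_inv :
    Tendsto (fun x : ℝ => (Real.tan (x / 2))⁻¹ / x⁻¹) (𝓝[>] 0) (𝓝 2) := by
  have hderiv : HasDerivAt (fun x : ℝ => Real.tan (x / 2)) (1 / 2) 0 := by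
    have h := (Real.hasDerivAt_tan (x := 0 / 2) (by simp)).comp (0 : ℝ)
      ((hasDerivAt_id (0 : ℝ)).div_const 2)
    simpa [Function.comp_def] using h
  have h := hderiv.tendsto_slope_zero_right.inv₀ (by norm_num)
  rw [one_div, inv_inv] at h
  refine h.congr fun x => ?_
  simp [div_eq_mul_inv, mul_comm]

lemma map_inv_tan_half_nhdsGT_zero :
    map (fun x : ℝ => (Real.tan (x / 2))⁻¹) (𝓝[>] 0) = atTop := by
  refine map_eq_of_inverse (fun T => 2 * Real.arctan T⁻¹) ?_ ?_ ?_
  · ext T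
    rw [Function.comp_apply, mul_div_cancel_left₀ _ two_ne_zero, Real.tan_arctan, inv_inv, id]
  · have h := tendsto_inv_tan_half_div_inv.pos_mul_atTop two_pos tendsto_inv_nhdsGT_zero
    refine h.congr' (eventually_mem_nhdsWithin.mono fun x (hx : 0 < x) => ?_)
    exact div_mul_cancel₀ _ (inv_pos.2 hx).ne'
  · refine tendsto_nhdsWithin_iff.2 ⟨?_, ?_⟩
    · simpa using ((Real.continuous_arctan.tendsto 0).comp tendsto_inv_atTop_zero).const_mul 2
    · filter_upwards [eventually_gt_atTop 0] with T hT
      simpa using hT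

theorem tendsto_spectralDistribution_div_iff (hν : ∀ᵐ l ∂ν, l ∈ Ico (-1) 1) {H : ℝ → ℝ} {ρ : ℝ}
    (hH : RegularlyVaryingAtTop H ρ) {b : ℝ} :
    Tendsto (fun x => spectralDistribution ν x / (x * H x⁻¹)) (𝓝[>] 0)
        (𝓝 (b * (2 ^ ρ / (2 * Real.pi)))) ↔
      Tendsto (fun T => (∫ v, arctanKernel (v / T) ∂cayleyMeasure ν) / H T) atTop (𝓝 b) := by
  let T (x : ℝ) : ℝ := (Real.tan (x / 2))⁻¹
  have hratio : Tendsto (fun x => H (T x) / H x⁻¹ / (T x / x⁻¹ * Real.pi)) (𝓝[>] 0)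
      (𝓝 (2 ^ ρ / (2 * Real.pi))) :=
    (hH.tendsto_div_of_tendsto_div two_pos tendsto_inv_nhdsGT_zero
      tendsto_inv_tan_half_div_inv).div (tendsto_inv_tan_half_div_inv.mul_const _) (by positivity)
  rw [← map_inv_tan_half_nhdsGT_zero, tendsto_map'_iff,
    ← tendsto_mul_iff_of_ne_zero (x := b) hratio (by positivity)]
  refine tendsto_congr' ?_
  filter_upwards [Ioo_mem_nhdsGT Real.pi_pos] with x hx
  have htan := tan_half_pos hx
  have hHT := hH.pos (T x) (inv_pos.2 htan)
  have hHx := hH.pos x⁻¹ (inv_pos.2 hx.1)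
  have hx₀ := hx.1
  simp only [spectralDistribution_eq hν hx, Function.comp_apply, T] at hHT ⊢
  generalize ∫ v, arctanKernel (v / (Real.tan (x / 2))⁻¹) ∂cayleyMeasure ν = I
  generalize H (Real.tan (x / 2))⁻¹ = HT at hHT ⊢
  generalize H x⁻¹ = Hx at hHx ⊢
  field_simp

end SpectralDistribution

section Main

variable {ρ : ℝ}

lemma Cconst_pos {α : ℝ} (hα : α ∈ Ioo 0 2) : 0 < Cconst α := by
  obtain ⟨hα₀, hα₂⟩ := hα
  have hsin : 0 < Real.sin (α * Real.pi / 2) :=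
    Real.sin_pos_of_pos_of_lt_pi (by positivity) (by nlinarith [Real.pi_pos])
  have := Real.Gamma_pos_of_pos (s := 1 + α) (by positivity)
  have := sub_pos.2 hα₂
  unfold Cconst
  positivity

lemma integral_varianceKernel_powerMeasure_pos (hρ : 0 ≤ ρ) (hρ₁ : ρ < 1) :
    0 < ∫ v, varianceKernel v ∂powerMeasure ρ := by
  rw [integral_varianceKernel_powerMeasure hρ hρ₁]
  have := Real.Gamma_pos_of_pos (sub_pos.2 hρ₁)
  positivity

theorem tendsto_VarSeqR_div_iff_spectralDistribution {ν : Measure ℝ} [IsFiniteMeasure ν]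
    (hν : ∀ᵐ l ∂ν, l ∈ Ico (-1) 1) (hρ : 0 ≤ ρ) (hρ₁ : ρ < 1) {H : ℝ → ℝ}
    (hH : RegularlyVaryingAtTop H ρ) :
    Tendsto (fun n : ℕ => VarSeqR ν n / (n * H n)) atTop (𝓝 1) ↔
      Tendsto (fun x => spectralDistribution ν x / (1 / 2 * Cconst (1 + ρ) * (x * H x⁻¹))) (𝓝[>] 0)
        (𝓝 1) := by
  have hC : 1 / 2 * Cconst (1 + ρ) ≠ 0 :=
    (mul_pos one_half_pos (Cconst_pos ⟨by positivity, by linarith⟩)).ne'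
  have hconst := integral_arctanKernel_eq_Cconst_mul hρ hρ₁
  have hq := integral_varianceKernel_powerMeasure_pos hρ hρ₁
  set q := ∫ v, varianceKernel v ∂powerMeasure ρ
  have hlim : 1 / 2 * Cconst (1 + ρ) * 1 =
      q⁻¹ * (∫ v, arctanKernel v ∂powerMeasure ρ) * (2 ^ ρ / (2 * Real.pi)) := by
    field_simp
    linear_combination -hconst
  rw [tendsto_div_const_mul_iff hC, hlim, tendsto_spectralDistribution_div_iff hν hH,
    tendsto_VarSeqR_div_iff hν (by linarith) hH,
    ← tendsto_integral_varianceKernel_div_iff_arctanKernel (ae_cayleyMeasure_nonneg hν)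
      (integrable_inv_one_add_cayleyMeasure hν) hρ hρ₁ hH (inv_pos.2 hq), inv_mul_cancel₀ hq.ne']

end Main

theorem reversible_regular_variation_iff_spectral_distribution_general
    (ν : Measure ℝ) [IsFiniteMeasure ν]
    (hsupp : ν (Set.Icc (-1 : ℝ) 1)ᶜ = 0)
    (h1 : ν {(1 : ℝ)} = 0)
    (α : ℝ) (hα : α ∈ Set.Ico (1 : ℝ) 2)
    (h : ℝ → ℝ) (hh : SlowlyVaryingAtTop h)
    (f : ℝ → ℝ)
    (hf : ∀ t : ℝ, f t = (1 / (2 * Real.pi)) *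
      ∫ l in Set.Icc (-1 : ℝ) 1, (1 - l ^ 2) / (1 + l ^ 2 - 2 * l * Real.cos t) ∂ν)
    (F : ℝ → ℝ) (hF : ∀ x : ℝ, F x = ∫ t in (0 : ℝ)..x, f t) :
    Tendsto (fun n : ℕ => VarSeqR ν n / ((n : ℝ) ^ α * h n)) atTop (𝓝 1) ↔
      Tendsto (fun x : ℝ => F x / ((1 / 2) * Cconst α * x ^ (2 - α) * h (1 / x)))
        (𝓝[>] (0 : ℝ)) (𝓝 1) := by
  obtain ⟨ρ, rfl⟩ : ∃ ρ, α = 1 + ρ := ⟨α - 1, by ring⟩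
  have hρ : 0 ≤ ρ := by linarith [hα.1]
  have hρ₁ : ρ < 1 := by linarith [hα.2]
  have hν : ∀ᵐ l ∂ν, l ∈ Ico (-1) 1 := by
    filter_upwards [hsupp, measure_eq_zero_iff_ae_notMem.1 h1] with l hl hl₁
    exact ⟨hl.1, lt_of_le_of_ne hl.2 hl₁⟩
  have hν_restrict : ν.restrict (Icc (-1) 1) = ν := Measure.restrict_eq_self_of_ae_mem hsupp
  have hF_eq : F = spectralDistribution ν := by
    ext x
    simp only [hF, hf, hν_restrict, intervalIntegral.integral_const_mul, spectralDistribution,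
      angularPoissonKernel]
  convert tendsto_VarSeqR_div_iff_spectralDistribution hν hρ hρ₁ (hh.rpow_mul ρ) using 1
  · refine tendsto_congr fun n => ?_
    rw [Real.rpow_one_add' n.cast_nonneg (by positivity), mul_assoc]
  · refine tendsto_congr' (eventually_mem_nhdsWithin.mono fun x (hx : 0 < x) => ?_)
    dsimp only
    rw [hF_eq, show 2 - (1 + ρ) = 1 - ρ by ring, Real.rpow_sub hx, Real.rpow_one, one_div x,
      Real.inv_rpow hx.le, mul_assoc (1 / 2 * _), div_eq_mul_inv x, mul_assoc x]

/-- **Corollary 2.3 (equivalence part).**  Let `ν` be a finite measure on `[-1,1]`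
with no atoms at `±1` (the transition spectral measure of a reversible Markov
chain), `f` the associated spectral density, `F(x) = ∫₀ˣ f`.  For `α ∈ [1,2)`
and `h` slowly varying: `Var_n ~ n^α h(n)` as `n → ∞` iff
`F(x) ~ (1/2) C(α) x^{2-α} h(1/x)` as `x → 0⁺`. -/
theorem reversible_regular_variation_iff_spectral_distribution
    (ν : Measure ℝ) [IsFiniteMeasure ν]
    (hsupp : ν (Set.Icc (-1 : ℝ) 1)ᶜ = 0)
    (hm1 : ν {(-1 : ℝ)} = 0) (h1 : ν {(1 : ℝ)} = 0)
    (α : ℝ) (hα : α ∈ Set.Ico (1:ℝ) 2)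
    (h : ℝ → ℝ) (hh : SlowlyVaryingAtTop h)
    (f : ℝ → ℝ)
    (hf : ∀ t : ℝ, f t = (1 / (2 * Real.pi)) *
      ∫ l in Set.Icc (-1 : ℝ) 1, (1 - l ^ 2) / (1 + l ^ 2 - 2 * l * Real.cos t) ∂ν)
    (F : ℝ → ℝ) (hF : ∀ x : ℝ, F x = ∫ t in (0:ℝ)..x, f t) :
    Tendsto (fun n : ℕ => VarSeqR ν n / ((n : ℝ) ^ α * h n)) atTop (𝓝 1) ↔
      Tendsto (fun x : ℝ => F x / ((1/2) * Cconst α * x ^ (2 - α) * h (1/x)))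
        (𝓝[>] (0:ℝ)) (𝓝 1) :=
  reversible_regular_variation_iff_spectral_distribution_general ν hsupp h1 α hα h hh f hf F hF
end
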